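/- arXiv:1104.0034 — 2 statements merged into one kernel-verified Lean document; each statement's English description precedes it below -/
import Mathlib

section
/- Let f be a transcendental entire function in the Eremenko–Lyubich class B such that the iterates of f tend to infinity uniformly on S(f), i.e. inf_{s∈S(f)} |fⁿ(s)| → ∞ as n → ∞. Let A ⊂ ℂ be a closed set with S(f) ∪ f(A) ⊂ A such that every connected component of A is unbounded. Suppose there exist ε > 0, c ∈ (0,1) and R > 0 with the following property: whenever z ∈ A with |z| ≥ R and w ∈ ℂ satisfies |w − z| < c|z|, one has dist(f(w), S(f)) > ε. Then f has no wandering domains. -/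
/-!
Formalization of: "Absence of wandering domains for functions in class B whose
singular values escape uniformly, under a thickness condition along an invariant set A."
-/

open Set Metric Filter Topology

/-- The chordal (spherical) distance between two finite points of the Riemann sphere. -/
noncomputable def sphericalDist (z w : ℂ) : ℝ :=
  2 * dist z w / (Real.sqrt (1 + ‖z‖ ^ 2) * Real.sqrt (1 + ‖w‖ ^ 2))

/-- A transcendental entire function: entire and not a polynomial. -/
def TranscendentalEntire (f : ℂ → ℂ) : Prop :=
  Differentiable ℂ f ∧ ¬∃ p : Polynomial ℂ, ∀ z : ℂ, f z = p.eval z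

/-- `S` is the set of singular values of `f`: the smallest closed set `S ⊆ ℂ` such that
`f : ℂ ∖ f⁻¹(S) → ℂ ∖ S` is a covering map. -/
def IsSingularValueSet (f : ℂ → ℂ) (S : Set ℂ) : Prop :=
  IsClosed S ∧ IsCoveringMapOn f Sᶜ ∧
    ∀ T : Set ℂ, IsClosed T → IsCoveringMapOn f Tᶜ → S ⊆ T

/-- The Fatou set of an entire function: points having a neighbourhood on which the family of
iterates is equicontinuous with respect to the spherical metric. -/
def FatouSet (f : ℂ → ℂ) : Set ℂ :=
  {z : ℂ | ∃ N : Set ℂ, IsOpen N ∧ z ∈ N ∧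
    ∀ x ∈ N, ∀ ε > (0 : ℝ), ∃ δ > (0 : ℝ), ∀ y ∈ N, dist y x < δ →
      ∀ n : ℕ, sphericalDist (f^[n] y) (f^[n] x) < ε}

/-- A wandering domain: a connected component `W` of the Fatou set whose forward images are
pairwise disjoint. -/
def IsWanderingDomain (f : ℂ → ℂ) (W : Set ℂ) : Prop :=
  (∃ z ∈ FatouSet f, W = connectedComponentIn (FatouSet f) z) ∧
    ∀ m n : ℕ, m ≠ n → f^[m] '' W ∩ f^[n] '' W = ∅

/-- **Bloch's theorem** (with a poor constant). -/
theorem exists_ball_subset_image_of_differentiableOn {g : ℂ → ℂ} {x : ℂ} {ρ : ℝ}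
    (hg : DifferentiableOn ℂ g (ball x ρ)) :
    ∃ p, ball p (ρ * ‖deriv g x‖ / 128) ⊆ g '' ball x ρ := by
  rcases le_or_gt ρ 0 with hρ | hρ
  · refine ⟨0, ?_⟩
    rw [ball_eq_empty.2]
    · exact empty_subset _
    · have := mul_nonneg (neg_nonneg.2 hρ) (norm_nonneg (deriv g x)); linarith
  by_cases h0 : deriv g x = 0
  · exact ⟨0, by simp [h0]⟩
  have hpos : 0 < ‖deriv g x‖ := norm_pos_iff.2 h0
  set r : ℝ := ρ / 2 with hr
  have hr0 : 0 < r := by positivity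
  have hg' : DifferentiableOn ℂ (deriv g) (ball x ρ) := hg.deriv isOpen_ball
  have hsub : closedBall x r ⊆ ball x ρ := closedBall_subset_ball (by linarith)
  have hcont : ContinuousOn (fun z => ‖deriv g z‖ * (r - dist z x)) (closedBall x r) :=
    ((hg'.continuousOn.mono hsub).norm).mul (by fun_prop)
  obtain ⟨z₀, hz₀, hmax⟩ := (isCompact_closedBall x r).exists_isMaxOn
    ⟨x, mem_closedBall_self hr0.le⟩ hcont
  have hM : ‖deriv g x‖ * r ≤ ‖deriv g z₀‖ * (r - dist z₀ x) := by
    have := hmax (mem_closedBall_self hr0.le)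
    simpa using this
  set m := ‖deriv g z₀‖ with hm
  have hzr : dist z₀ x ≤ r := hz₀
  set t := (r - dist z₀ x) / 2 with ht
  have hmt : ‖deriv g x‖ * r ≤ m * (2 * t) := by rw [ht]; linarith
  have ht0 : 0 < t := by
    by_contra h
    have : m * (2 * t) ≤ 0 := by
      have : 0 ≤ m := norm_nonneg _
      nlinarith
    have := mul_pos hpos hr0
    linarith
  have hm0 : 0 < m := by
    by_contra h
    have : m * (2 * t) ≤ 0 := by nlinarith
    have := mul_pos hpos hr0
    linarith
  have hballr : ∀ z ∈ ball z₀ t, z ∈ closedBall x r ∧ t ≤ r - dist z x := by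
    intro z hz
    have h1 : dist z z₀ < t := hz
    have h2 := dist_triangle z z₀ x
    refine ⟨?_, by linarith⟩
    rw [mem_closedBall]; linarith
  have hd2 : ∀ z ∈ ball z₀ t, ‖deriv g z‖ ≤ 2 * m := by
    intro z hz
    obtain ⟨h1, h2⟩ := hballr z hz
    have h3 : ‖deriv g z‖ * (r - dist z x) ≤ m * (r - dist z₀ x) := hmax h1
    have h4 : ‖deriv g z‖ * t ≤ ‖deriv g z‖ * (r - dist z x) := by gcongr
    have h5 : ‖deriv g z‖ * t ≤ 2 * m * t := by
      have : m * (r - dist z₀ x) = 2 * m * t := by rw [ht]; ring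
      linarith
    exact le_of_mul_le_mul_right h5 ht0
  have hsub2 : ball z₀ t ⊆ ball x ρ := fun z hz => hsub (hballr z hz).1
  have hsch : ∀ z ∈ ball z₀ t, ‖deriv g z - deriv g z₀‖ ≤ 4 * m / t * dist z z₀ := by
    intro z hz
    have := Complex.dist_le_div_mul_dist_of_mapsTo_ball (f := deriv g) (c := z₀) (R₁ := t)
      (R₂ := 4 * m) (hg'.mono hsub2) (fun w hw => ?_) hz
    · rwa [← dist_eq_norm]
    · rw [mem_closedBall, dist_eq_norm]
      have := norm_sub_le (deriv g w) (deriv g z₀)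
      have := hd2 w hw
      linarith
  have hcb : closedBall z₀ (t / 8) ⊆ ball z₀ t := closedBall_subset_ball (by linarith)
  have hlow : ∀ z ∈ sphere z₀ (t / 8), m * t / 16 ≤ ‖g z - g z₀‖ := by
    intro z hz
    have hz' : dist z z₀ = t / 8 := hz
    have hmv := (convex_closedBall z₀ (t / 8)).norm_image_sub_le_of_norm_hasDerivWithin_le
      (f := fun w => g w - deriv g z₀ * w) (f' := fun w => deriv g w - deriv g z₀) (C := m / 2)
      (x := z₀) (y := z)
      (fun w hw => by
        have hd : DifferentiableAt ℂ g w :=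
          hg.differentiableAt (isOpen_ball.mem_nhds (hsub2 (hcb hw)))
        have := hd.hasDerivAt.sub ((hasDerivAt_id w).const_mul (deriv g z₀))
        simp only [mul_one] at this
        exact this.hasDerivWithinAt)
      (fun w hw => by
        refine (hsch w (hcb hw)).trans ?_
        have : dist w z₀ ≤ t / 8 := hw
        calc 4 * m / t * dist w z₀ ≤ 4 * m / t * (t / 8) := by gcongr
          _ = m / 2 := by field_simp; norm_num)
      (mem_closedBall_self (by positivity)) (sphere_subset_closedBall hz)
    rw [← dist_eq_norm z z₀, hz'] at hmv
    have h1 : ‖deriv g z₀ * (z - z₀)‖ = m * (t / 8) := by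
      rw [norm_mul, ← dist_eq_norm z z₀, hz']
    have h2 : deriv g z₀ * (z - z₀) = (g z - g z₀) - (g z - deriv g z₀ * z -
      (g z₀ - deriv g z₀ * z₀)) := by ring
    have h3 := norm_sub_le (g z - g z₀) (g z - deriv g z₀ * z - (g z₀ - deriv g z₀ * z₀))
    rw [← h2, h1] at h3
    nlinarith
  have hfreq : ∃ᶠ z in 𝓝 z₀, g z ≠ g z₀ := by
    intro hev
    have hev' : g =ᶠ[𝓝 z₀] fun _ => g z₀ := by
      filter_upwards [hev] with z hz
      simpa using hz
    have := hev'.deriv_eq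
    simp only [deriv_const] at this
    rw [hm, this] at hm0
    simp at hm0
  have hdc : DiffContOnCl ℂ g (ball z₀ (t / 8)) :=
    (hg.mono (by
      rw [closure_ball z₀ (by positivity)]
      exact hcb.trans hsub2)).diffContOnCl
  refine ⟨g z₀, ?_⟩
  have hfin := hdc.ball_subset_image_closedBall (by positivity) hlow hfreq
  refine Subset.trans (ball_subset_ball ?_) (hfin.trans (image_mono (hcb.trans hsub2)))
  have : r = ρ / 2 := hr
  rw [this] at hmt
  linarith

/-- A holomorphic function on a disc whose image contains no vertical segment of length `2π` has
small derivative at the centre. -/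
theorem norm_deriv_le_of_no_vertical_segment {g : ℂ → ℂ} {x : ℂ} {ρ : ℝ} (hρ : 0 < ρ)
    (hg : DifferentiableOn ℂ g (ball x ρ))
    (hseg : ∀ u : ℂ, ∃ t ∈ Icc (0 : ℝ) (2 * Real.pi), u + t * Complex.I ∉ g '' ball x ρ) :
    ‖deriv g x‖ ≤ 512 / ρ := by
  by_contra! h
  obtain ⟨p, hp⟩ := exists_ball_subset_image_of_differentiableOn hg
  obtain ⟨t, ht, hnot⟩ := hseg (p - Real.pi * Complex.I)
  apply hnot
  apply hp
  rw [mem_ball, dist_eq_norm]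
  have : p - Real.pi * Complex.I + t * Complex.I - p = ((t - Real.pi : ℝ) : ℂ) * Complex.I := by
    push_cast; ring
  rw [this, norm_mul, Complex.norm_I, mul_one, Complex.norm_real, Real.norm_eq_abs]
  have h1 : |t - Real.pi| ≤ Real.pi := by
    rw [abs_le]; constructor <;> linarith [ht.1, ht.2]
  have h2 : 512 < ρ * ‖deriv g x‖ := by
    rw [div_lt_iff₀ hρ] at h; linarith
  have := Real.pi_lt_four
  linarith

/-- Holomorphic logarithms on convex open sets. -/
theorem exists_exp_eq_of_convex {g : ℂ → ℂ} {U : Set ℂ} (hUo : IsOpen U) (hUc : Convex ℝ U)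
    (hg : DifferentiableOn ℂ g U) (h0 : ∀ z ∈ U, g z ≠ 0) :
    ∃ L : ℂ → ℂ, DifferentiableOn ℂ L U ∧ ∀ z ∈ U, Complex.exp (L z) = g z := by
  rcases U.eq_empty_or_nonempty with rfl | hne
  · exact ⟨fun _ => 0, by simp, by simp⟩
  have hsc : IsSimplyConnected U := by
    have := hUc.contractibleSpace hne
    exact SimplyConnectedSpace.ofContractible U
  obtain ⟨L, hL, hE⟩ := Complex.exists_continuousOn_eqOn_exp_comp hsc hUo hg.continuousOn
    (by rintro ⟨z, hz, h⟩; exact h0 z hz h)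
  refine ⟨L, fun z hz => ?_, hE⟩
  have hLc : ContinuousAt L z := hL.continuousAt (hUo.mem_nhds hz)
  have hgd : HasDerivAt g (deriv g z) z := (hg.differentiableAt (hUo.mem_nhds hz)).hasDerivAt
  have hE' : Complex.exp (L z) = g z := hE hz
  -- near `z`, `L = L z + log (g / g z)`
  have hlim : Tendsto (fun w => L w - L z) (𝓝 z) (𝓝 0) := by
    have := (hLc.sub_const (L z) : Tendsto _ _ _)
    simpa using this
  have hev : L =ᶠ[𝓝 z] fun w => L z + Complex.log (g w / g z) := by
    filter_upwards [hlim.eventually (ball_mem_nhds 0 Real.pi_pos), hUo.mem_nhds hz] with w hw hwU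
    have hE'' : Complex.exp (L w) = g w := hE hwU
    replace hw : ‖L w - L z‖ < Real.pi := by rwa [← dist_zero_right]
    have him : |(L w - L z).im| < Real.pi := (Complex.abs_im_le_norm _).trans_lt hw
    rw [← hE', ← hE'', ← Complex.exp_sub, Complex.log_exp (by linarith [(abs_lt.1 him).1])
      (by linarith [(abs_lt.1 him).2])]
    ring
  have hlog : DifferentiableAt ℂ (fun w => L z + Complex.log (g w / g z)) z := by
    refine (DifferentiableAt.clog (hgd.differentiableAt.div_const _) ?_).const_add _
    rw [div_self (h0 z hz)]
    exact Complex.one_mem_slitPlane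
  exact (hlog.congr_of_eventuallyEq hev).differentiableWithinAt

/-- If `g - a` is the exponential of `L`, and `g` omits a set containing `a` which meets all circles
around `a`, then the derivative of `L` is bounded in terms of the distance to the boundary. -/
theorem exists_log_of_omits {g : ℂ → ℂ} {U : Set ℂ} (hUo : IsOpen U) (hUc : Convex ℝ U)
    (hg : DifferentiableOn ℂ g U) {K : Set ℂ} {a : ℂ} (ha : a ∈ K)
    (hK : ∀ t > 0, ∃ z ∈ K, ‖z - a‖ = t) (homit : ∀ z ∈ U, g z ∉ K) :
    ∃ L : ℂ → ℂ, DifferentiableOn ℂ L U ∧ (∀ z ∈ U, Complex.exp (L z) = g z - a) ∧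
      ∀ x ρ, 0 < ρ → ball x ρ ⊆ U → ‖deriv L x‖ ≤ 512 / ρ := by
  obtain ⟨L, hL, hE⟩ := exists_exp_eq_of_convex hUo hUc (hg.sub_const a)
    (fun z hz h => homit z hz (by rwa [sub_eq_zero.1 h]))
  refine ⟨L, hL, hE, fun x ρ hρ hsub => ?_⟩
  refine norm_deriv_le_of_no_vertical_segment hρ (hL.mono hsub) fun u => ?_
  obtain ⟨k, hk, hkn⟩ := hK (Real.exp u.re) (Real.exp_pos _)
  have hne : k - a ≠ 0 := by
    rw [← norm_pos_iff, hkn]; exact Real.exp_pos _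
  -- write `k - a = exp (u + t I)` with `0 ≤ t ≤ 2 π`
  set θ := (Complex.log (k - a) - u).im with hθ
  set n : ℤ := ⌊θ / (2 * Real.pi)⌋ with hn
  have hpi := Real.pi_pos
  refine ⟨θ - n * (2 * Real.pi), ⟨?_, ?_⟩, ?_⟩
  · have := Int.floor_le (θ / (2 * Real.pi))
    rw [← hn, le_div_iff₀ (by positivity)] at this
    linarith
  · have := (Int.lt_floor_add_one (θ / (2 * Real.pi))).le
    rw [← hn, div_le_iff₀ (by positivity)] at this
    linarith
  · rintro ⟨z, hz, hz'⟩
    apply homit z (hsub hz)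
    have h1 := hE z (hsub hz)
    have hre : (Complex.log (k - a) - u).re = 0 := by
      rw [Complex.sub_re, Complex.log_re, hkn, Real.log_exp, sub_self]
    have h2 : Complex.log (k - a) - u = θ * Complex.I := by
      apply Complex.ext <;> simp [hre, hθ]
    have h3 : L z = Complex.log (k - a) - n * (2 * Real.pi * Complex.I) := by
      rw [hz']
      push_cast
      linear_combination -h2
    rw [h3, Complex.exp_periodic.sub_int_mul_eq, Complex.exp_log hne] at h1
    have : g z = k := by linear_combination -h1
    rwa [this]

theorem norm_deriv_le_of_omits {g : ℂ → ℂ} {x : ℂ} {ρ : ℝ} (hρ : 0 < ρ)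
    (hg : DifferentiableOn ℂ g (ball x ρ)) {K : Set ℂ} {a : ℂ} (ha : a ∈ K)
    (hK : ∀ t > 0, ∃ z ∈ K, ‖z - a‖ = t) (homit : ∀ z ∈ ball x ρ, g z ∉ K) :
    ‖deriv g x‖ ≤ 512 / ρ * ‖g x - a‖ := by
  obtain ⟨L, hL, hE, hb⟩ := exists_log_of_omits isOpen_ball (convex_ball x ρ) hg ha hK homit
  have hx : ball x ρ ∈ 𝓝 x := ball_mem_nhds x hρ
  have h1 : HasDerivAt (fun z => Complex.exp (L z)) (Complex.exp (L x) * deriv L x) x :=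
    (hL.differentiableAt hx).hasDerivAt.cexp
  have h2 : (fun z => Complex.exp (L z)) =ᶠ[𝓝 x] fun z => g z - a := by
    filter_upwards [hx] with z hz using hE z hz
  have h3 := h1.deriv
  rw [h2.deriv_eq, deriv_sub_const, hE x (mem_ball_self hρ)] at h3
  rw [h3, norm_mul, mul_comm]
  gcongr
  exact hb x ρ hρ subset_rfl

theorem norm_deriv_le_of_injOn {g : ℂ → ℂ} {x : ℂ} {ρ : ℝ} (hρ : 0 < ρ)
    (hg : DifferentiableOn ℂ g (ball x ρ)) {p : ℂ} (hinj : InjOn g (ball x ρ))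
    (homit : ∀ z ∈ ball x ρ, g z ≠ p) :
    ‖deriv g x‖ ≤ 512 / ρ * ‖g x - p‖ := by
  obtain ⟨L, hL, hE⟩ := exists_exp_eq_of_convex isOpen_ball (convex_ball x ρ) (hg.sub_const p)
    (fun z hz h => homit z hz (sub_eq_zero.1 h))
  have hx : ball x ρ ∈ 𝓝 x := ball_mem_nhds x hρ
  have h1 : HasDerivAt (fun z => Complex.exp (L z)) (Complex.exp (L x) * deriv L x) x :=
    (hL.differentiableAt hx).hasDerivAt.cexp
  have h2 : (fun z => Complex.exp (L z)) =ᶠ[𝓝 x] fun z => g z - p := by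
    filter_upwards [hx] with z hz using hE z hz
  have h3 := h1.deriv
  rw [h2.deriv_eq, deriv_sub_const, hE x (mem_ball_self hρ)] at h3
  rw [h3, norm_mul, mul_comm]
  gcongr
  refine norm_deriv_le_of_no_vertical_segment hρ hL fun u => ?_
  by_contra! hall
  have hpi := Real.pi_pos
  obtain ⟨z₁, hz₁, e₁⟩ := hall 0 ⟨le_rfl, by positivity⟩
  obtain ⟨z₂, hz₂, e₂⟩ := hall (2 * Real.pi) ⟨by positivity, le_rfl⟩
  have : g z₁ - p = g z₂ - p := by
    rw [← hE z₁ hz₁, ← hE z₂ hz₂, e₁, e₂]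
    push_cast
    rw [zero_mul, add_zero, Complex.exp_periodic u]
  have hz := hinj hz₁ hz₂ (by linear_combination this)
  rw [hz, e₂] at e₁
  have := congrArg Complex.im e₁
  simp at this

/-- An entire function has nonzero derivative wherever it is a local homeomorphism. -/
theorem deriv_ne_zero_of_openPartialHomeomorph {f : ℂ → ℂ} (hf : Differentiable ℂ f)
    (e : OpenPartialHomeomorph ℂ ℂ) (he : f = e) {z : ℂ} (hz : z ∈ e.source) :
    deriv f z ≠ 0 := by
  have hw : e z ∈ e.target := e.map_source hz
  have hsz : e.symm (e z) = z := e.left_inv hz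
  have hcont : ContinuousAt e.symm (e z) := e.continuousAt_symm hw
  have hfan : AnalyticAt ℂ f z := hf.analyticAt z
  have hright : ∀ᶠ w in 𝓝 (e z), f (e.symm w) = w := by
    filter_upwards [e.open_target.mem_nhds hw] with w hw
    rw [he]; exact e.right_inv hw
  rcases hfan.deriv.eventually_eq_zero_or_eventually_ne_zero with h | h
  · exfalso
    obtain ⟨r, hr, hr'⟩ := Metric.eventually_nhds_iff_ball.1 (h.and (e.open_source.mem_nhds hz))
    have hz' : z + (r / 2 : ℝ) ∈ ball z r := by
      simp [abs_of_pos hr]; linarith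
    have hconst := (convex_ball z r).is_const_of_fderivWithin_eq_zero (𝕜 := ℂ) (f := f)
      hf.differentiableOn (fun w hw => by
        rw [fderivWithin_of_isOpen isOpen_ball hw]
        ext
        simpa using (hr' w hw).1) (mem_ball_self hr) hz'
    have := e.injOn hz (hr' _ hz').2 (by rw [← he]; exact hconst)
    have h3 : ((r / 2 : ℝ) : ℂ) = 0 := by linear_combination -this
    rw [Complex.ofReal_eq_zero] at h3
    linarith
  · have hpunct : ∀ᶠ w in 𝓝[≠] e z, DifferentiableAt ℂ e.symm w := by
      have ht : Tendsto e.symm (𝓝[≠] e z) (𝓝[≠] z) := by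
        refine tendsto_nhdsWithin_iff.2 ⟨?_, ?_⟩
        · have := hcont.tendsto
          rw [hsz] at this
          exact this.mono_left nhdsWithin_le_nhds
        · filter_upwards [self_mem_nhdsWithin,
            mem_nhdsWithin_of_mem_nhds (e.open_target.mem_nhds hw)] with w hw1 hw2 hw3
          apply hw1
          rw [mem_singleton_iff] at hw3 ⊢
          rw [← hw3, e.right_inv hw2]
      filter_upwards [ht.eventually h, mem_nhdsWithin_of_mem_nhds (e.open_target.mem_nhds hw)]
        with w hw1 hw2
      have hd : HasStrictDerivAt f (deriv f (e.symm w)) (e.symm w) :=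
        (hf.analyticAt _).hasStrictDerivAt
      have := hd.of_local_left_inverse (e.continuousAt_symm hw2) hw1 (by
        filter_upwards [e.open_target.mem_nhds hw2] with v hv
        rw [he]; exact e.right_inv hv)
      exact this.hasDerivAt.differentiableAt
    have han := Complex.analyticAt_of_differentiable_on_punctured_nhds_of_continuousAt hpunct hcont
    have hc : HasDerivAt (fun w => f (e.symm w)) (deriv f z * deriv e.symm (e z)) (e z) := by
      have h1 : HasDerivAt f (deriv f z) (e.symm (e z)) := by
        rw [hsz]; exact (hf z).hasDerivAt
      exact h1.comp (e z) han.differentiableAt.hasDerivAt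
    have h1 := hc.deriv
    have hev : (fun w => f (e.symm w)) =ᶠ[𝓝 (e z)] id := hright
    rw [hev.deriv_eq, deriv_id] at h1
    intro h0
    rw [h0, zero_mul] at h1
    exact one_ne_zero h1

section Lifting

variable {f : ℂ → ℂ} {S : Set ℂ}

theorem deriv_ne_zero_of_isCoveringMapOn (hf : Differentiable ℂ f) (hcov : IsCoveringMapOn f Sᶜ)
    {z : ℂ} (hz : f z ∉ S) : deriv f z ≠ 0 := by
  obtain ⟨e, hze, he⟩ := hcov.isLocalHomeomorphOn z hz
  exact deriv_ne_zero_of_openPartialHomeomorph hf e he hze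

/-- Continuous solutions of `f ∘ χ = e` are holomorphic. -/
theorem differentiableOn_of_lift (hf : Differentiable ℂ f) (hcov : IsCoveringMapOn f Sᶜ)
    {Q : Set ℂ} (hQ : IsOpen Q) {e χ : ℂ → ℂ} (he : DifferentiableOn ℂ e Q)
    (heS : ∀ q ∈ Q, e q ∉ S) (hχ : ContinuousOn χ Q) (hχe : ∀ q ∈ Q, f (χ q) = e q) :
    DifferentiableOn ℂ χ Q := by
  intro q hq
  have hfq : f (χ q) ∉ S := by rw [hχe q hq]; exact heS q hq
  obtain ⟨ψ, hψ, hψf⟩ := hcov.isLocalHomeomorphOn (χ q) hfq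
  have hd : HasStrictDerivAt f (deriv f (χ q)) (χ q) := (hf.analyticAt _).hasStrictDerivAt
  have hψt : f (χ q) ∈ ψ.target := by rw [hψf]; exact ψ.map_source hψ
  have hsymm : ψ.symm (f (χ q)) = χ q := by
    conv_lhs => rw [hψf]
    exact ψ.left_inv hψ
  have hψd : DifferentiableAt ℂ ψ.symm (e q) := by
    rw [← hχe q hq]
    rw [← hsymm] at hd
    have := hd.of_local_left_inverse (f := f) (ψ.continuousAt_symm hψt) (by
      rw [hsymm]; exact deriv_ne_zero_of_isCoveringMapOn hf hcov hfq) (by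
      filter_upwards [ψ.open_target.mem_nhds hψt] with v hv
      conv_lhs => rw [hψf]
      exact ψ.right_inv hv)
    exact this.hasDerivAt.differentiableAt
  have hχc : ContinuousAt χ q := hχ.continuousAt (hQ.mem_nhds hq)
  have hev : χ =ᶠ[𝓝 q] fun w => ψ.symm (e w) := by
    filter_upwards [hQ.mem_nhds hq, hχc.preimage_mem_nhds (ψ.open_source.mem_nhds hψ)] with w hw hw'
    rw [← hχe w hw]
    conv_rhs => rw [hψf]
    exact (ψ.left_inv hw').symm
  have hcomp : DifferentiableAt ℂ (fun w => ψ.symm (e w)) q :=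
    hψd.comp q (he.differentiableAt (hQ.mem_nhds hq))
  exact (hcomp.congr_of_eventuallyEq hev).differentiableWithinAt

theorem exists_lift (hf : Differentiable ℂ f) (hcov : IsCoveringMapOn f Sᶜ)
    {Q : Set ℂ} (hQ : IsOpen Q) (hQc : Convex ℝ Q) {e : ℂ → ℂ} (he : DifferentiableOn ℂ e Q)
    (heS : ∀ q ∈ Q, e q ∉ S) {q₀ z₀ : ℂ} (hq₀ : q₀ ∈ Q) (hz₀ : f z₀ = e q₀) :
    ∃ χ : ℂ → ℂ, DifferentiableOn ℂ χ Q ∧ χ q₀ = z₀ ∧ ∀ q ∈ Q, f (χ q) = e q := by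
  classical
  have := hQc.contractibleSpace ⟨q₀, hq₀⟩
  have : SimplyConnectedSpace Q := SimplyConnectedSpace.ofContractible Q
  have := hQ.locallyPathConnectedSpace
  obtain ⟨F, ⟨hF1, hF2⟩, -⟩ := hcov.existsUnique_continuousMap_lifts
    (f := ⟨Q.domRestrict e, he.continuousOn.domRestrict⟩) (a₀ := ⟨q₀, hq₀⟩) (e₀ := z₀) hz₀
    (fun a => heS a a.2)
  refine ⟨fun q => if h : q ∈ Q then F ⟨q, h⟩ else 0, ?_, by simp [hq₀, hF1], ?_⟩
  · have h2 : ∀ q ∈ Q, f (if h : q ∈ Q then F ⟨q, h⟩ else 0) = e q := by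
      intro q hq
      have h3 : f (F ⟨q, hq⟩) = e q := congrFun hF2 ⟨q, hq⟩
      simpa [hq] using h3
    refine differentiableOn_of_lift hf hcov hQ he heS ?_ h2
    rw [continuousOn_iff_continuous_domRestrict]
    convert F.continuous using 1
    ext q
    simp
  · intro q hq
    have h3 : f (F ⟨q, hq⟩) = e q := congrFun hF2 ⟨q, hq⟩
    simpa [hq] using h3

theorem eqOn_of_lift (hcov : IsCoveringMapOn f Sᶜ)
    {Q : Set ℂ} (hQ : IsOpen Q) (hQc : Convex ℝ Q) {χ₁ χ₂ : ℂ → ℂ}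
    (h₁ : ContinuousOn χ₁ Q) (h₂ : ContinuousOn χ₂ Q) (hf : Continuous f)
    (hS : ∀ q ∈ Q, f (χ₁ q) ∉ S) (heq : ∀ q ∈ Q, f (χ₁ q) = f (χ₂ q))
    {q₀ : ℂ} (hq₀ : q₀ ∈ Q) (h0 : χ₁ q₀ = χ₂ q₀) : EqOn χ₁ χ₂ Q := by
  have := hQc.contractibleSpace ⟨q₀, hq₀⟩
  have : SimplyConnectedSpace Q := SimplyConnectedSpace.ofContractible Q
  have := hQ.locallyPathConnectedSpace
  obtain ⟨F, -, hF⟩ := hcov.existsUnique_continuousMap_lifts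
    (f := ⟨fun q : Q => f (χ₁ q), hf.comp h₁.domRestrict⟩) (a₀ := ⟨q₀, hq₀⟩)
    (e₀ := χ₁ q₀) rfl (fun a => hS a a.2)
  have e1 := hF ⟨Q.domRestrict χ₁, h₁.domRestrict⟩ ⟨rfl, rfl⟩
  have e2 := hF ⟨Q.domRestrict χ₂, h₂.domRestrict⟩ ⟨h0.symm, by
    ext q; exact (heq q q.2).symm⟩
  intro q hq
  exact congrFun (congrArg DFunLike.coe (e1.trans e2.symm)) ⟨q, hq⟩

theorem exists_iterate_lift (hf : Differentiable ℂ f) (hcov : IsCoveringMapOn f Sᶜ)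
    {B : Set ℂ} (hSB : S ⊆ B) (hB : MapsTo f B B) {Q : Set ℂ} (hQ : IsOpen Q) (hQc : Convex ℝ Q)
    (n : ℕ) {e : ℂ → ℂ} (he : DifferentiableOn ℂ e Q) (heB : ∀ q ∈ Q, e q ∉ B) {q₀ z₀ : ℂ}
    (hq₀ : q₀ ∈ Q) (hz₀ : f^[n] z₀ = e q₀) :
    ∃ χ : ℂ → ℂ, DifferentiableOn ℂ χ Q ∧ χ q₀ = z₀ ∧ (∀ q ∈ Q, f^[n] (χ q) = e q) ∧
      ∀ q ∈ Q, ∀ j ≤ n, f^[j] (χ q) ∉ B := by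
  have key : ∃ χ : ℂ → ℂ, DifferentiableOn ℂ χ Q ∧ χ q₀ = z₀ ∧ (∀ q ∈ Q, f^[n] (χ q) = e q) := by
    induction n generalizing e with
    | zero => exact ⟨e, he, hz₀.symm, fun q _ => rfl⟩
    | succ n ih =>
      rw [Function.iterate_succ_apply'] at hz₀
      obtain ⟨χ₁, h1, h2, h3⟩ := exists_lift hf hcov hQ hQc he
        (fun q hq h => heB q hq (hSB h)) hq₀ hz₀
      obtain ⟨χ, h4, h5, h6⟩ := ih h1 (fun q hq h => heB q hq (by rw [← h3 q hq]; exact hB h))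
        h2.symm
      refine ⟨χ, h4, h5, fun q hq => ?_⟩
      rw [Function.iterate_succ_apply', h6 q hq, h3 q hq]
  obtain ⟨χ, h1, h2, h3⟩ := key
  refine ⟨χ, h1, h2, h3, fun q hq j hj h => heB q hq ?_⟩
  rw [← h3 q hq]
  obtain ⟨k, rfl⟩ := Nat.exists_eq_add_of_le hj
  rw [add_comm, Function.iterate_add_apply]
  exact hB.iterate k h

end Lifting

theorem exists_polynomial_of_growth {f : ℂ → ℂ} (hf : Differentiable ℂ f) {C M : ℝ} {d : ℕ}
    (hb : ∀ z, M ≤ ‖z‖ → ‖f z‖ ≤ C * ‖z‖ ^ d) :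
    ∃ p : Polynomial ℂ, ∀ z, f z = p.eval z := by
  have hzero : ∀ n, d < n → iteratedDeriv n f 0 = 0 := by
    intro n hn
    have hle : ∀ r : ℝ, max M 1 ≤ r → ‖iteratedDeriv n f 0‖ ≤ n.factorial * |C| * r⁻¹ := by
      intro r hr
      have hr1 : 1 ≤ r := (le_max_right _ _).trans hr
      have hr0 : 0 < r := by linarith
      have := Complex.norm_iteratedDeriv_le_of_forall_mem_sphere_norm_le n hr0
        (hf.diffContOnCl (s := ball 0 r)) (C := |C| * r ^ d) (fun z hz => by
          have hz' : ‖z‖ = r := by simpa using hz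
          have h1 := hb z (by rw [hz']; exact (le_max_left _ _).trans hr)
          rw [hz'] at h1
          exact h1.trans (by gcongr; exact le_abs_self C))
      refine this.trans ?_
      rw [div_le_iff₀ (by positivity)]
      have h2 : r ^ d ≤ r⁻¹ * r ^ n := by
        rw [inv_mul_eq_div, le_div_iff₀ hr0, ← pow_succ]
        exact pow_le_pow_right₀ hr1 hn
      calc (n.factorial : ℝ) * (|C| * r ^ d) ≤ n.factorial * (|C| * (r⁻¹ * r ^ n)) := by gcongr
        _ = _ := by ring
    have hlim : Tendsto (fun r : ℝ => n.factorial * |C| * r⁻¹) atTop (𝓝 0) := by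
      simpa using tendsto_inv_atTop_zero.const_mul ((n.factorial : ℝ) * |C|)
    have := ge_of_tendsto hlim (eventually_atTop.2 ⟨max M 1, hle⟩)
    exact norm_le_zero_iff.1 this
  refine ⟨∑ n ∈ Finset.range (d + 1),
    Polynomial.C ((n.factorial : ℂ)⁻¹ * iteratedDeriv n f 0) * Polynomial.X ^ n, fun z => ?_⟩
  rw [← Complex.taylorSeries_eq_of_entire' 0 z hf, tsum_eq_sum (s := Finset.range (d + 1)),
    Polynomial.eval_finsetSum]
  · simp
  · intro n hn
    rw [hzero n (by simpa using hn)]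
    simp

section Tract

variable {f : ℂ → ℂ}

/-- If a lift of the exponential through `f` near infinity is periodic, then `f` is a polynomial. -/
theorem exists_polynomial_of_periodic_lift (hf : Differentiable ℂ f) {ℓ : ℝ} {φ : ℂ → ℂ}
    (hφ : DifferentiableOn ℂ φ {u | ℓ < u.re}) (hφe : ∀ u, ℓ < u.re → f (φ u) = Complex.exp u)
    {d : ℕ} (hd : 0 < d)
    (hper : ∀ u, ℓ < u.re → φ (u + 2 * Real.pi * Complex.I * d) = φ u) :
    ∃ p : Polynomial ℂ, ∀ z, f z = p.eval z := by
  classical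
  set P : ℝ := 2 * Real.pi * d with hP
  have hP0 : 0 < P := by have := Real.pi_pos; positivity
  set h : ℂ → ℂ := fun w => if ℓ < w.im then (φ (-Complex.I * w))⁻¹ else 0 with hh
  have hre : ∀ w : ℂ, (-Complex.I * w).re = w.im := fun w => by simp
  have hh1 : ∀ w : ℂ, ℓ < w.im → h w = (φ (-Complex.I * w))⁻¹ := fun w hw => by simp [hh, hw]
  have hperh : Function.Periodic h P := by
    intro w
    have him : (w + P).im = w.im := by simp
    by_cases hw : ℓ < w.im
    · rw [hh1 w hw, hh1 _ (by rw [him]; exact hw)]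
      congr 1
      have := hper (-Complex.I * (w + P)) (by rw [hre, him]; exact hw)
      rw [← this]
      congr 1
      rw [hP]; push_cast; ring
    · simp only [hh, him, hw, if_false]
  have hlarge : ∀ M : ℝ, ∃ T : ℝ, ℓ ≤ T ∧ ∀ u : ℂ, T < u.re → M < ‖φ u‖ := by
    intro M
    obtain ⟨B, hB⟩ := (isCompact_closedBall (0 : ℂ) M).exists_bound_of_continuousOn
      hf.continuous.continuousOn
    refine ⟨max ℓ (Real.log (max B 1)), le_max_left _ _, fun u hu => ?_⟩
    by_contra! hle
    have h1 := hB (φ u) (by simpa using hle)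
    rw [hφe u ((le_max_left _ _).trans_lt hu), Complex.norm_exp] at h1
    have h2 : Real.log (max B 1) < u.re := (le_max_right _ _).trans_lt hu
    rw [Real.log_lt_iff_lt_exp (by positivity)] at h2
    linarith [le_max_left B 1]
  have hev : ∀ {p : ℂ → Prop} {T : ℝ}, (∀ w : ℂ, T < w.im → p w) →
      ∀ᶠ w in comap Complex.im atTop, p w := by
    intro p T hp
    exact (eventually_gt_atTop T).comap Complex.im |>.mono fun w hw => hp w hw
  have hz : Filter.ZeroAtFilter (comap Complex.im atTop) h := by
    rw [Filter.ZeroAtFilter, Metric.tendsto_nhds]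
    intro ε hε
    obtain ⟨T, hT, hT'⟩ := hlarge ε⁻¹
    refine hev (T := T) fun w hw => ?_
    rw [dist_zero_right, hh1 w (hT.trans_lt hw), norm_inv]
    exact inv_lt_of_inv_lt₀ hε (hT' _ (by rwa [hre]))
  obtain ⟨T₀, hT₀, hT₀'⟩ := hlarge 0
  have hol : ∀ᶠ w in comap Complex.im atTop, DifferentiableAt ℂ h w := by
    refine hev (T := T₀) fun w hw => ?_
    have hopen : IsOpen {w : ℂ | T₀ < w.im} := isOpen_lt continuous_const Complex.continuous_im
    have hopen2 : IsOpen {u : ℂ | ℓ < u.re} := isOpen_lt continuous_const Complex.continuous_re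
    have h1 : DifferentiableAt ℂ (fun w => (φ (-Complex.I * w))⁻¹) w := by
      refine DifferentiableAt.inv ?_ ?_
      · have : DifferentiableAt ℂ φ (-Complex.I * w) :=
          hφ.differentiableAt (hopen2.mem_nhds (by
            rw [mem_ofPred_eq, hre]; exact hT₀.trans_lt hw))
        exact this.comp w (by fun_prop)
      · rw [← norm_pos_iff]; exact hT₀' _ (by rwa [hre])
    refine h1.congr_of_eventuallyEq ?_
    filter_upwards [hopen.mem_nhds hw] with v hv
    exact hh1 v (hT₀.trans_lt hv)
  obtain ⟨C, hC⟩ := (Function.Periodic.exp_decay_of_zero_at_inf hP0 hperh hol hz).bound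
  rw [eventually_comap, eventually_atTop] at hC
  obtain ⟨T₁, hT₁⟩ := hC
  set q := Function.Periodic.cuspFunction P h with hq
  have hq0 : q 0 = 0 := Function.Periodic.cuspFunction_zero_of_zero_at_inf hP0 hz
  have hqd : AnalyticAt ℂ q 0 :=
    Complex.analyticAt_of_differentiable_on_punctured_nhds_of_continuousAt
      (Function.Periodic.eventually_differentiableAt_cuspFunction_nhds_ne_zero hP0 hperh hol)
      (Function.Periodic.differentiableAt_cuspFunction_zero hP0 hperh hol
        hz.boundedAtFilter).continuousAt
  set T := max T₀ T₁ with hT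
  have hV : ∀ᶠ x in 𝓝[≠] (0 : ℂ), T < (Function.Periodic.invQParam P x).im :=
    (Function.Periodic.invQParam_tendsto hP0).eventually (hev (T := T) fun w hw => hw)
  have hopenmap : 𝓝 (q 0) ≤ map q (𝓝 0) := by
    refine hqd.eventually_constant_or_nhds_le_map_nhds.resolve_left fun hconst => ?_
    have h1 := (hconst.filter_mono (nhdsWithin_le_nhds (s := {0}ᶜ))).and
      (hV.and self_mem_nhdsWithin)
    obtain ⟨x, hx1, hx2, hx3⟩ := h1.exists
    rw [hq0, hq, Function.Periodic.cuspFunction_eq_of_nonzero _ _ hx3,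
      hh1 _ (hT₀.trans_lt ((le_max_left _ _).trans_lt hx2)), inv_eq_zero] at hx1
    have := hT₀' (-Complex.I * Function.Periodic.invQParam P x)
      (by rw [hre]; exact (le_max_left _ _).trans_lt hx2)
    rw [hx1] at this
    simp at this
  rw [hq0] at hopenmap
  have hV' : q '' {x | x = 0 ∨ T < (Function.Periodic.invQParam P x).im} ∈ 𝓝 (0 : ℂ) := by
    apply hopenmap
    refine image_mem_map ?_
    rw [eventually_nhdsWithin_iff] at hV
    filter_upwards [hV] with x hx
    by_cases h0 : x = 0
    · exact Or.inl h0
    · exact Or.inr (hx h0)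
  obtain ⟨δ, hδ, hδV⟩ := Metric.mem_nhds_iff.1 hV'
  refine exists_polynomial_of_growth hf (C := |C| ^ d) (M := 2 / δ) (d := d) fun z hz => ?_
  have hz0 : 0 < ‖z‖ := lt_of_lt_of_le (by positivity) hz
  have hzb : z⁻¹ ∈ ball (0 : ℂ) δ := by
    rw [mem_ball_zero_iff, norm_inv]
    refine inv_lt_of_inv_lt₀ hδ (lt_of_lt_of_le ?_ hz)
    rw [inv_eq_one_div]
    gcongr
    norm_num
  obtain ⟨x, hx, hxz⟩ := hδV hzb
  have hx0 : x ≠ 0 := by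
    rintro rfl
    rw [hq0] at hxz
    have : z ≠ 0 := norm_pos_iff.1 hz0
    exact this (inv_eq_zero.1 hxz.symm)
  have hxT := hx.resolve_left hx0
  rw [hq, Function.Periodic.cuspFunction_eq_of_nonzero _ _ hx0] at hxz
  set w := Function.Periodic.invQParam P x with hw
  have hwℓ : ℓ < w.im := hT₀.trans_lt ((le_max_left _ _).trans_lt hxT)
  have hbd := hT₁ w.im ((le_max_right _ _).trans hxT.le) w rfl
  rw [hxz, norm_inv, Real.norm_of_nonneg (Real.exp_pos _).le] at hbd
  rw [hh1 w hwℓ, inv_inj] at hxz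
  have hfz : ‖f z‖ = Real.exp w.im := by
    rw [← hxz, hφe _ (by rwa [hre]), Complex.norm_exp, hre]
  have hd0 : (d : ℝ) ≠ 0 := by exact_mod_cast hd.ne'
  have hpi : Real.pi ≠ 0 := Real.pi_ne_zero
  have hexp : Real.exp (-2 * Real.pi * w.im / P) = (Real.exp (w.im / d))⁻¹ := by
    rw [← Real.exp_neg]
    congr 1
    rw [hP]; field_simp
  rw [hexp] at hbd
  have h3 : Real.exp (w.im / d) ≤ |C| * ‖z‖ := by
    have h4 : ‖z‖⁻¹ ≤ |C| * (Real.exp (w.im / d))⁻¹ :=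
      hbd.trans (by gcongr; exact le_abs_self C)
    have h5 := Real.exp_pos (w.im / d)
    rw [← div_eq_mul_inv, le_div_iff₀ h5, inv_mul_eq_div, div_le_iff₀ hz0] at h4
    exact h4
  rw [hfz, ← mul_pow]
  calc Real.exp w.im = Real.exp (w.im / d) ^ d := by
        rw [← Real.exp_nat_mul]; congr 1; field_simp
    _ ≤ _ := by gcongr

theorem finite_inter_preimage {K : Set ℂ} (hf : Differentiable ℂ f) (hnc : ¬∃ c, ∀ z, f z = c)
    (hK : IsCompact K) (v : ℂ) : (K ∩ f ⁻¹' {v}).Finite := by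
  by_contra hinf
  obtain ⟨x, hx, hacc⟩ := Set.Infinite.exists_accPt_of_subset_isCompact hinf hK inter_subset_left
  apply hnc
  have hfr : ∃ᶠ y in 𝓝[≠] x, f y = (fun _ => v) y := by
    rw [accPt_iff_frequently_nhdsNE] at hacc
    exact hacc.mono fun y hy => hy.2
  have := AnalyticOnNhd.eq_of_frequently_eq (f := f) (g := fun _ => v)
    (fun z _ => hf.analyticAt z) (fun z _ => analyticAt_const) hfr
  exact ⟨v, fun z => congrFun this z⟩

/-- For a transcendental entire function, the set where `|f|` is small meets every circle. -/
theorem TranscendentalEntire.exists_norm_le_on_circle {S : Set ℂ} (hf : TranscendentalEntire f)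
    (hcov : IsCoveringMapOn f Sᶜ) {r : ℝ} (hr : 0 < r) (hS : ∀ s ∈ S, ‖s‖ ≤ r) {a : ℂ}
    (ha : ‖f a‖ < r) {t : ℝ} (ht : 0 < t) : ∃ z, ‖f z‖ ≤ r ∧ ‖z - a‖ = t := by
  by_contra! hcon
  have hfd := hf.1
  have hfc : Continuous fun z => ‖f z‖ := hfd.continuous.norm
  obtain ⟨zm, hzm, hmin⟩ := (isCompact_sphere a t).exists_isMinOn
    ((NormedSpace.sphere_nonempty (x := a)).2 ht.le) hfc.continuousOn
  have hm : r < ‖f zm‖ := by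
    by_contra! h
    exact hcon zm h (by rw [← dist_eq_norm]; exact hzm)
  obtain ⟨m', hm1, hm2⟩ := exists_between hm
  have hat : a + t ∈ sphere a t := by simp [abs_of_pos ht]
  -- a point of the disc where the norm of `f` is intermediate
  obtain ⟨x, hx, hxm⟩ : ∃ x ∈ Icc (0 : ℝ) 1, ‖f (a + x * t)‖ = m' := by
    have hc : ContinuousOn (fun x : ℝ => ‖f (a + x * t)‖) (Icc 0 1) :=
      (hfc.comp (by fun_prop : Continuous fun x : ℝ => a + (x : ℂ) * t)).continuousOn
    refine intermediate_value_Icc zero_le_one hc ⟨?_, ?_⟩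
    · simp; linarith
    · have : ‖f zm‖ ≤ ‖f (a + t)‖ := hmin hat
      simp; linarith
  set z₁ := a + x * t with hz₁
  have hr0 := hr
  have hfz₁ : f z₁ ≠ 0 := by rw [← norm_pos_iff, hxm]; linarith
  set H : Set ℂ := {u | Real.log r < u.re} with hH
  have hHo : IsOpen H := isOpen_lt continuous_const Complex.continuous_re
  have hHc : Convex ℝ H := convex_halfSpace_re_gt _
  have hexpH : ∀ u ∈ H, r < ‖Complex.exp u‖ := fun u hu => by
    rw [Complex.norm_exp]; exact (Real.log_lt_iff_lt_exp hr).1 hu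
  have hexpS : ∀ u ∈ H, Complex.exp u ∉ S := fun u hu h => by
    linarith [hexpH u hu, hS _ h]
  have hu₁ : Complex.log (f z₁) ∈ H := by
    rw [hH, mem_ofPred_eq, Complex.log_re, hxm]
    exact Real.log_lt_log hr hm1
  set u₁ := Complex.log (f z₁) with hu₁'
  have hexpu₁ : Complex.exp u₁ = f z₁ := Complex.exp_log hfz₁
  obtain ⟨φ, hφ, hφ1, hφe⟩ := exists_lift hfd hcov hHo hHc
    Complex.differentiable_exp.differentiableOn hexpS hu₁ hexpu₁.symm
  have hline : ∀ y : ℝ, u₁ + y * Complex.I ∈ H := fun y => by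
    have : (u₁ + y * Complex.I).re = u₁.re := by simp
    rw [hH, mem_ofPred_eq, this]; exact hu₁
  have hstay : ∀ y : ℝ, φ (u₁ + y * Complex.I) ∈ closedBall a t := by
    intro y
    by_contra hy
    have hcφ : Continuous fun y : ℝ => dist (φ (u₁ + y * Complex.I)) a := by
      refine Continuous.dist ?_ continuous_const
      exact hφ.continuousOn.comp_continuous (by fun_prop) hline
    have h0 : dist (φ (u₁ + (0 : ℝ) * Complex.I)) a ≤ t := by
      simp only [Complex.ofReal_zero, zero_mul, add_zero, hφ1, hz₁, dist_self_add_left, norm_mul,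
        Complex.norm_real, Real.norm_eq_abs, abs_of_pos ht, abs_of_nonneg hx.1]
      nlinarith [hx.2]
    rw [mem_closedBall, not_le] at hy
    obtain ⟨y', hy'⟩ := mem_range_of_exists_le_of_exists_ge hcφ ⟨0, h0⟩ ⟨y, hy.le⟩
    have h1 : ‖f zm‖ ≤ ‖f (φ (u₁ + y' * Complex.I))‖ := hmin hy'
    rw [hφe _ (hline y'), Complex.norm_exp] at h1
    have h2 : ‖f z₁‖ = Real.exp u₁.re := by rw [← hexpu₁, Complex.norm_exp]
    have h3 : (u₁ + y' * Complex.I).re = u₁.re := by simp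
    rw [h3, ← h2, hxm] at h1
    linarith
  have hnc : ¬∃ c, ∀ z, f z = c := by
    rintro ⟨c, hc⟩
    exact hf.2 ⟨Polynomial.C c, fun z => by simp [hc z]⟩
  have hfin := finite_inter_preimage hfd hnc (isCompact_closedBall a t) (f z₁)
  obtain ⟨k, l, hkl, hφkl⟩ : ∃ k l : ℕ, k < l ∧
      φ (u₁ + (2 * Real.pi * k : ℝ) * Complex.I) = φ (u₁ + (2 * Real.pi * l : ℝ) * Complex.I) := by
    have hmaps : MapsTo (fun k : ℕ => φ (u₁ + (2 * Real.pi * k : ℝ) * Complex.I)) univ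
        (closedBall a t ∩ f ⁻¹' {f z₁}) := by
      refine fun k _ => ⟨hstay _, ?_⟩
      rw [mem_preimage, mem_singleton_iff, hφe _ (hline _), ← hexpu₁]
      have : u₁ + (2 * Real.pi * k : ℝ) * Complex.I = u₁ + k * (2 * Real.pi * Complex.I) := by
        push_cast; ring
      rw [this]
      exact Complex.exp_periodic.nat_mul k _
    obtain ⟨k, -, l, -, hne, heq⟩ := infinite_univ.exists_lt_map_eq_of_mapsTo hmaps hfin
    exact ⟨k, l, by assumption, by assumption⟩
  have hshift : ∀ (j : ℕ), ∀ u ∈ H, u + (2 * Real.pi * j : ℝ) * Complex.I ∈ H := fun j u hu => by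
    have : (u + (2 * Real.pi * j : ℝ) * Complex.I).re = u.re := by
      rw [Complex.add_re, Complex.re_ofReal_mul]; simp
    rw [hH, mem_ofPred_eq, this]; exact hu
  have hshiftf : ∀ (j : ℕ), ∀ u ∈ H, f (φ (u + (2 * Real.pi * j : ℝ) * Complex.I))
      = Complex.exp u := fun j u hu => by
    rw [hφe _ (hshift j u hu)]
    have : u + (2 * Real.pi * j : ℝ) * Complex.I = u + j * (2 * Real.pi * Complex.I) := by
      push_cast; ring
    rw [this]
    exact Complex.exp_periodic.nat_mul j _
  have heqH := eqOn_of_lift hcov hHo hHc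
    (hφ.continuousOn.comp (by fun_prop) (hshift k)) (hφ.continuousOn.comp (by fun_prop) (hshift l))
    hfd.continuous (fun u hu => by
      simp only [Function.comp_def]; rw [hshiftf k u hu]; exact hexpS u hu)
    (fun u hu => by simp only [Function.comp_def]; rw [hshiftf k u hu, hshiftf l u hu])
    hu₁ hφkl
  refine hf.2 (exists_polynomial_of_periodic_lift hfd hφ hφe (Nat.sub_pos_of_lt hkl) fun u hu => ?_)
  have hu' : u - (2 * Real.pi * k : ℝ) * Complex.I ∈ H := by
    have : (u - (2 * Real.pi * k : ℝ) * Complex.I).re = u.re := by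
      rw [Complex.sub_re, Complex.re_ofReal_mul]; simp
    rw [hH, mem_ofPred_eq, this]; exact hu
  have := heqH hu'
  simp only [Function.comp_def, sub_add_cancel] at this
  rw [this, Nat.cast_sub hkl.le]
  congr 1
  push_cast
  ring

/-- The basic expansion estimate for functions with bounded set of singular values. -/
theorem TranscendentalEntire.norm_mul_log_le {S : Set ℂ} (hf : TranscendentalEntire f)
    (hcov : IsCoveringMapOn f Sᶜ) {r : ℝ} (hr : 0 < r) (hS : ∀ s ∈ S, ‖s‖ ≤ r) {a : ℂ}
    (ha : ‖f a‖ < r) {w : ℂ} (hw : r < ‖f w‖) :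
    ‖f w‖ * Real.log (‖f w‖ / r) ≤ 512 * (‖deriv f w‖ * ‖w - a‖) := by
  set H : Set ℂ := {u | Real.log r < u.re} with hH
  have hHo : IsOpen H := isOpen_lt continuous_const Complex.continuous_re
  have hHc : Convex ℝ H := convex_halfSpace_re_gt _
  have hexpH : ∀ u ∈ H, r < ‖Complex.exp u‖ := fun u hu => by
    rw [Complex.norm_exp]; exact (Real.log_lt_iff_lt_exp hr).1 hu
  have hexpS : ∀ u ∈ H, Complex.exp u ∉ S := fun u hu h => by
    linarith [hexpH u hu, hS _ h]
  have hfw : f w ≠ 0 := by rw [← norm_pos_iff]; linarith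
  have hu : Complex.log (f w) ∈ H := by
    rw [hH, mem_ofPred_eq, Complex.log_re]
    exact Real.log_lt_log hr hw
  obtain ⟨φ, hφ, hφ1, hφe⟩ := exists_lift hf.1 hcov hHo hHc
    Complex.differentiable_exp.differentiableOn hexpS hu (Complex.exp_log hfw).symm
  set u := Complex.log (f w) with hu'
  set ρ := u.re - Real.log r with hρ
  have hρ0 : 0 < ρ := by rw [hρ, sub_pos]; exact hu
  have hsub : ball u ρ ⊆ H := by
    intro v hv
    have h1 : ‖v - u‖ < ρ := by rw [← dist_eq_norm]; exact hv
    have h2 := (abs_le.1 (Complex.abs_re_le_norm (v - u))).1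
    rw [Complex.sub_re] at h2
    rw [hH, mem_ofPred_eq]; linarith
  have hN := norm_deriv_le_of_omits hρ0 (hφ.mono hsub) (K := {z | ‖f z‖ ≤ r}) (a := a) ha.le
    (fun t ht => hf.exists_norm_le_on_circle hcov hr hS ha ht) (fun v hv h => by
      have h1 : ‖f (φ v)‖ ≤ r := h
      rw [hφe v (hsub hv)] at h1
      linarith [hexpH v (hsub hv)])
  have hd : HasDerivAt (fun v => f (φ v)) (deriv f w * deriv φ u) u := by
    have h1 : HasDerivAt f (deriv f w) (φ u) := by rw [hφ1]; exact (hf.1 w).hasDerivAt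
    exact h1.comp u (hφ.differentiableAt (hHo.mem_nhds hu)).hasDerivAt
  have hev : (fun v => f (φ v)) =ᶠ[𝓝 u] Complex.exp := by
    filter_upwards [hHo.mem_nhds hu] with v hv using hφe v hv
  have h1 := hd.deriv
  rw [hev.deriv_eq, Complex.deriv_exp, Complex.exp_log hfw] at h1
  rw [hφ1] at hN
  have hlog : Real.log (‖f w‖ / r) = ρ := by
    rw [Real.log_div (norm_ne_zero_iff.2 hfw) hr.ne', hρ, hu', Complex.log_re]
  rw [hlog]
  calc ‖f w‖ * ρ = ‖deriv f w‖ * ‖deriv φ u‖ * ρ := by rw [h1, norm_mul]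
    _ ≤ ‖deriv f w‖ * (512 / ρ * ‖w - a‖) * ρ := by gcongr
    _ = _ := by field_simp

end Tract

section Spherical

theorem dist_lt_one_of_sphericalDist_lt {x y : ℂ} {M : ℝ} (hx : ‖x‖ ≤ M)
    (h : sphericalDist y x < 1 / (1 + M) ^ 2) : dist y x < 1 := by
  by_contra! hD
  have hM : 0 ≤ M := (norm_nonneg x).trans hx
  have h1 : Real.sqrt (1 + ‖x‖ ^ 2) ≤ 1 + M := by
    rw [Real.sqrt_le_left (by positivity)]
    nlinarith [norm_nonneg x]
  have hy : ‖y‖ ≤ M + dist y x := by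
    have := norm_le_norm_add_norm_sub x y
    rw [← dist_eq_norm, dist_comm] at this
    linarith
  have h2 : Real.sqrt (1 + ‖y‖ ^ 2) ≤ (1 + M) * (2 * dist y x) := by
    rw [Real.sqrt_le_left (by positivity)]
    have h3 : 1 + ‖y‖ ^ 2 ≤ (1 + M + dist y x) ^ 2 := by nlinarith [norm_nonneg y]
    have h4 : 1 + M + dist y x ≤ (1 + M) * (2 * dist y x) := by nlinarith
    exact h3.trans (by gcongr)
  have hpos : 0 < Real.sqrt (1 + ‖y‖ ^ 2) * Real.sqrt (1 + ‖x‖ ^ 2) := by positivity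
  rw [sphericalDist, div_lt_div_iff₀ hpos (by positivity)] at h
  have : Real.sqrt (1 + ‖y‖ ^ 2) * Real.sqrt (1 + ‖x‖ ^ 2) ≤
      ((1 + M) * (2 * dist y x)) * (1 + M) := by gcongr
  nlinarith

theorem sphericalDist_comm (x y : ℂ) : sphericalDist x y = sphericalDist y x := by
  rw [sphericalDist, sphericalDist, dist_comm, mul_comm (Real.sqrt _)]

theorem sphericalDist_le_of_exp {x y a l₁ l₂ : ℂ} (h₁ : Complex.exp l₁ = y - a)
    (h₂ : Complex.exp l₂ = x - a) (hl : ‖l₁ - l₂‖ ≤ 1) :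
    sphericalDist y x ≤ 4 * (1 + ‖a‖) * ‖l₁ - l₂‖ := by
  have h3 : y - x = (x - a) * (Complex.exp (l₁ - l₂) - 1) := by
    rw [← h₂, mul_sub, ← Complex.exp_add, mul_one, add_sub_cancel, h₁, h₂]; ring
  have h4 : dist y x ≤ (‖x‖ + ‖a‖) * (2 * ‖l₁ - l₂‖) := by
    rw [dist_eq_norm, h3, norm_mul]
    gcongr
    · exact norm_sub_le _ _
    · exact Complex.norm_exp_sub_one_le hl
  have h5 : 1 ≤ Real.sqrt (1 + ‖y‖ ^ 2) := by
    rw [Real.one_le_sqrt]; nlinarith [norm_nonneg y]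
  have h6 : 1 ≤ Real.sqrt (1 + ‖x‖ ^ 2) := by
    rw [Real.one_le_sqrt]; nlinarith [norm_nonneg x]
  have h7 : ‖x‖ ≤ Real.sqrt (1 + ‖x‖ ^ 2) := by
    apply Real.le_sqrt_of_sq_le; linarith
  rw [sphericalDist, div_le_iff₀ (by positivity)]
  have h8 : ‖x‖ + ‖a‖ ≤ (1 + ‖a‖) * Real.sqrt (1 + ‖x‖ ^ 2) := by
    nlinarith [norm_nonneg a]
  calc 2 * dist y x ≤ 2 * (((1 + ‖a‖) * Real.sqrt (1 + ‖x‖ ^ 2)) * (2 * ‖l₁ - l₂‖)) := by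
        have := h4.trans (mul_le_mul_of_nonneg_right h8 (by positivity : 0 ≤ 2 * ‖l₁ - l₂‖))
        linarith
    _ = 4 * (1 + ‖a‖) * ‖l₁ - l₂‖ * (1 * Real.sqrt (1 + ‖x‖ ^ 2)) := by ring
    _ ≤ _ := by gcongr

end Spherical

section Fatou

variable {f : ℂ → ℂ}

theorem isOpen_fatouSet (f : ℂ → ℂ) : IsOpen (FatouSet f) := by
  rw [isOpen_iff_mem_nhds]
  rintro z ⟨N, hN, hz, h⟩
  filter_upwards [hN.mem_nhds hz] with y hy
  exact ⟨N, hN, hy, h⟩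

theorem exists_ball_sphericalDist_lt {z : ℂ} (hz : z ∈ FatouSet f) {η : ℝ} (hη : 0 < η) :
    ∃ δ > 0, ∀ y ∈ ball z δ, ∀ n, sphericalDist (f^[n] y) (f^[n] z) < η := by
  obtain ⟨N, hN, hzN, h⟩ := hz
  obtain ⟨δ, hδ, hd⟩ := h z hzN η hη
  obtain ⟨r, hr, hrN⟩ := Metric.isOpen_iff.1 hN z hzN
  refine ⟨min δ r, lt_min hδ hr, fun y hy n => ?_⟩
  rw [mem_ball, lt_min_iff] at hy
  exact hd y (hrN hy.2) hy.1 n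

/-- A form of Montel's theorem for families omitting a set which meets all circles around a
point. -/
theorem ball_subset_fatouSet (hf : Differentiable ℂ f) {y : ℂ} {δ : ℝ} {K : Set ℂ} {a : ℂ}
    (ha : a ∈ K) (hK : ∀ t > 0, ∃ z ∈ K, ‖z - a‖ = t)
    (homit : ∀ n, ∀ z ∈ ball y δ, f^[n] z ∉ K) : ball y (δ / 2) ⊆ FatouSet f := by
  intro x₀ hx₀
  have hδ : 0 < δ := by
    have : 0 < δ / 2 := dist_nonneg.trans_lt hx₀
    linarith
  refine ⟨ball y (δ / 2), isOpen_ball, hx₀, fun x hx η hη => ?_⟩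
  set C := 512 / (δ / 2) with hC
  have hC0 : 0 < C := by positivity
  have hE : 0 < 4 * (1 + ‖a‖) := by positivity
  refine ⟨min (1 / C) (η / (4 * (1 + ‖a‖) * C)), by positivity, fun x' hx' hd n => ?_⟩
  obtain ⟨L, hL, hexp, hLd⟩ := exists_log_of_omits isOpen_ball (convex_ball y δ)
    (hf.iterate n).differentiableOn ha hK (homit n)
  have hsub : ball y (δ / 2) ⊆ ball y δ := ball_subset_ball (by linarith)
  have hLip : ‖L x' - L x‖ ≤ C * ‖x' - x‖ :=
    (convex_ball y (δ / 2)).norm_image_sub_le_of_norm_deriv_le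
      (fun v hv => hL.differentiableAt (isOpen_ball.mem_nhds (hsub hv)))
      (fun v hv => hLd v (δ / 2) (by positivity) fun u hu => by
        have h1 : dist u v < δ / 2 := hu
        have h2 : dist v y < δ / 2 := hv
        have := dist_triangle u v y
        rw [mem_ball]; linarith) hx hx'
  rw [lt_min_iff, dist_eq_norm] at hd
  have h1 : C * ‖x' - x‖ < 1 := by
    have := hd.1; rw [lt_div_iff₀ hC0] at this; linarith
  have h2 := hd.2
  rw [lt_div_iff₀ (by positivity)] at h2
  refine (sphericalDist_le_of_exp (hexp x' (hsub hx')) (hexp x (hsub hx))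
    (hLip.trans h1.le)).trans_lt ?_
  calc 4 * (1 + ‖a‖) * ‖L x' - L x‖ ≤ 4 * (1 + ‖a‖) * (C * ‖x' - x‖) := by gcongr
    _ < η := by linarith

end Fatou

section Dynamics

variable {f : ℂ → ℂ} {S : Set ℂ}

theorem TranscendentalEntire.isOpenMap (hf : TranscendentalEntire f) : IsOpenMap f := by
  have han : AnalyticOnNhd ℂ f univ := fun z _ => hf.1.analyticAt z
  refine han.is_constant_or_isOpenMap.resolve_left ?_
  rintro ⟨c, hc⟩
  exact hf.2 ⟨Polynomial.C c, fun z => by simp [hc z]⟩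

theorem TranscendentalEntire.isOpenMap_iterate (hf : TranscendentalEntire f) (n : ℕ) :
    IsOpenMap f^[n] := by
  induction n with
  | zero => exact IsOpenMap.id
  | succ n ih => exact ih.comp hf.isOpenMap

theorem TranscendentalEntire.singularSet_nonempty (hf : TranscendentalEntire f)
    (hcov : IsCoveringMapOn f Sᶜ) : S.Nonempty := by
  by_contra hne
  rw [not_nonempty_iff_eq_empty] at hne
  subst hne
  obtain ⟨χ, -, -, hχ⟩ := exists_lift (z₀ := 0) hf.1 hcov isOpen_univ convex_univ
    (e := id) differentiableOn_id (by simp) (mem_univ (f 0)) rfl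
  have ha : f (χ 0) = 0 := hχ 0 (mem_univ _)
  obtain ⟨w, hw⟩ : ∃ w, f w ≠ 0 := by
    by_contra! h
    exact hf.2 ⟨0, by simpa using h⟩
  have hw0 : 0 < ‖f w‖ := norm_pos_iff.2 hw
  set D := 512 * (‖deriv f w‖ * ‖w - χ 0‖) with hD
  have hD0 : 0 ≤ D := by positivity
  set X := D / ‖f w‖ + 1 with hX
  have hX0 : 0 < X := by positivity
  have := hf.norm_mul_log_le hcov (r := ‖f w‖ * Real.exp (-X)) (by positivity) (by simp)
    (a := χ 0) (by rw [ha, norm_zero]; positivity) (w := w) (by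
      have : Real.exp (-X) < 1 := by rw [← Real.exp_zero, Real.exp_lt_exp]; linarith
      nlinarith)
  rw [show ‖f w‖ / (‖f w‖ * Real.exp (-X)) = Real.exp X by
    rw [Real.exp_neg]; field_simp, Real.log_exp, hX] at this
  have h2 : ‖f w‖ * (D / ‖f w‖ + 1) = D + ‖f w‖ := by field_simp
  rw [h2] at this
  linarith

/-- The derivative along an orbit. -/
theorem deriv_iterate_succ' (hf : Differentiable ℂ f) (n : ℕ) (z : ℂ) :
    deriv f^[n + 1] z = deriv f (f^[n] z) * deriv f^[n] z := by
  rw [Function.iterate_succ']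
  exact deriv_comp z (hf _) ((hf.iterate n) z)

theorem not_tendsto_norm_iterate_of_mem_fatouSet (hf : TranscendentalEntire f)
    (hcov : IsCoveringMapOn f Sᶜ) (hSb : Bornology.IsBounded S) {z₀ : ℂ} (hz₀ : z₀ ∈ FatouSet f) :
    ¬Tendsto (fun n => ‖f^[n] z₀‖) atTop atTop := by
  intro hlim
  obtain ⟨R₀, hR₀⟩ := hSb.exists_norm_le
  set r := max (max R₀ (‖f 0‖ + 1)) 1 with hr
  have hr1 : 1 ≤ r := le_max_right _ _
  have hr0 : 0 < r := by linarith
  have hrS : ∀ s ∈ S, ‖s‖ ≤ r := fun s hs =>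
    (hR₀ s hs).trans ((le_max_left _ _).trans (le_max_left _ _))
  have hf0 : ‖f 0‖ < r := by
    have : ‖f 0‖ + 1 ≤ r := (le_max_right _ _).trans (le_max_left _ _)
    linarith
  obtain ⟨δ, hδ, hsph⟩ := exists_ball_sphericalDist_lt hz₀
    (η := 1 / (1 + r) ^ 2) (by positivity)
  obtain ⟨n₀, hn₀⟩ := eventually_atTop.1 (hlim.eventually_gt_atTop (r + 1))
  have hout : ∀ n ≥ n₀, ∀ y ∈ ball z₀ δ, r < ‖f^[n] y‖ := by
    intro n hn y hy
    by_contra! hle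
    have h1 := hsph y hy n
    rw [sphericalDist_comm] at h1
    have h2 := dist_lt_one_of_sphericalDist_lt hle h1
    have h3 := norm_le_norm_add_norm_sub (f^[n] y) (f^[n] z₀)
    rw [← dist_eq_norm, dist_comm] at h3
    linarith [hn₀ n hn]
  have hopen : IsOpen (f^[n₀] '' ball z₀ δ) := hf.isOpenMap_iterate n₀ _ isOpen_ball
  set y₀ := f^[n₀] z₀ with hy₀
  obtain ⟨ρ, hρ, hρsub⟩ := Metric.isOpen_iff.1 hopen y₀ ⟨z₀, mem_ball_self hδ, rfl⟩
  have hout' : ∀ n, ∀ y ∈ ball y₀ ρ, r < ‖f^[n] y‖ := by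
    intro n y hy
    obtain ⟨x, hx, rfl⟩ := hρsub hy
    rw [← Function.iterate_add_apply]
    exact hout _ (by omega) x hx
  have hout₀ : ∀ n, r < ‖f^[n] y₀‖ := fun n => hout' n y₀ (mem_ball_self hρ)
  have hub : ∀ n, ‖deriv f^[n] y₀‖ ≤ 512 / ρ * ‖f^[n] y₀‖ := by
    intro n
    have := norm_deriv_le_of_omits (g := f^[n]) hρ (hf.1.iterate n).differentiableOn
      (K := {z | ‖f z‖ ≤ r}) (a := 0) hf0.le
      (fun t ht => hf.exists_norm_le_on_circle hcov hr0 hrS hf0 ht) (fun v hv h => by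
        have h1 : ‖f (f^[n] v)‖ ≤ r := h
        rw [← Function.iterate_succ_apply' f] at h1
        linarith [hout' (n + 1) v hv])
    simpa using this
  have hlim' : Tendsto (fun n => ‖f^[n] y₀‖) atTop atTop := by
    have := hlim.comp (tendsto_add_atTop_nat n₀)
    refine this.congr fun n => ?_
    simp [hy₀, ← Function.iterate_add_apply]
  obtain ⟨n₁, hn₁⟩ := eventually_atTop.1 (hlim'.eventually_gt_atTop (r * Real.exp 1024))
  set q : ℕ → ℝ := fun n => ‖deriv f^[n] y₀‖ / ‖f^[n] y₀‖ with hq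
  have hv0 : ∀ n, 0 < ‖f^[n] y₀‖ := fun n => hr0.trans (hout₀ n)
  have hd0 : ∀ n, 0 < ‖deriv f^[n] y₀‖ := by
    intro n
    rw [norm_pos_iff]
    induction n with
    | zero => simp
    | succ n ih =>
      rw [deriv_iterate_succ' hf.1]
      refine mul_ne_zero (deriv_ne_zero_of_isCoveringMapOn hf.1 hcov fun h => ?_) ih
      have := hout₀ (n + 1)
      rw [Function.iterate_succ_apply'] at this
      linarith [hrS _ h]
  have hq2 : ∀ n ≥ n₁, 2 * q n ≤ q (n + 1) := by
    intro n hn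
    have h1 : r < ‖f (f^[n] y₀)‖ := by
      rw [← Function.iterate_succ_apply' f]; exact hout₀ (n + 1)
    have h2 := hf.norm_mul_log_le hcov hr0 hrS hf0 h1
    rw [sub_zero, ← Function.iterate_succ_apply' f] at h2
    have h3 : 1024 ≤ Real.log (‖f^[n + 1] y₀‖ / r) := by
      rw [Real.le_log_iff_exp_le (div_pos (hv0 _) hr0), le_div_iff₀ hr0]
      linarith [hn₁ (n + 1) (by omega)]
    have h4 : ‖f^[n + 1] y₀‖ * 2 ≤ ‖deriv f (f^[n] y₀)‖ * ‖f^[n] y₀‖ := by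
      nlinarith [hv0 (n + 1)]
    simp only [hq]
    rw [deriv_iterate_succ' hf.1, norm_mul, mul_div_assoc', div_le_div_iff₀ (hv0 _) (hv0 _)]
    nlinarith [hd0 n]
  have hgrow : ∀ k, 2 ^ k * q n₁ ≤ q (n₁ + k) := by
    intro k
    induction k with
    | zero => simp
    | succ k ih =>
      have := hq2 (n₁ + k) (by omega)
      rw [pow_succ, ← add_assoc]
      linarith
  have hqpos : 0 < q n₁ := div_pos (hd0 _) (hv0 _)
  obtain ⟨k, hk⟩ := pow_unbounded_of_one_lt (512 / ρ / q n₁) (one_lt_two (α := ℝ))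
  rw [div_lt_iff₀ hqpos] at hk
  have h1 : q (n₁ + k) ≤ 512 / ρ := by
    simp only [hq]
    rw [div_le_iff₀ (hv0 _)]
    exact hub _
  linarith [hgrow k]

end Dynamics

section Wandering

variable {f : ℂ → ℂ} {S W : Set ℂ}

/-- A local inverse of an entire function `g` defined on a ball of radius `ρ` bounds the
derivative of `g` from below. -/
theorem le_mul_norm_deriv_of_inverse {g χ : ℂ → ℂ} {w z b : ℂ} {ρ : ℝ} (hg : Differentiable ℂ g)
    (hρ : 0 < ρ) (hχ : DifferentiableOn ℂ χ (ball w ρ)) (hχw : χ w = z)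
    (hgχ : ∀ q ∈ ball w ρ, g (χ q) = q) (hb : g b ∉ ball w ρ) :
    ρ ≤ 512 * (‖deriv g z‖ * ‖z - b‖) := by
  have hinj : InjOn χ (ball w ρ) := fun x hx y hy h => by
    rw [← hgχ x hx, ← hgχ y hy, h]
  have h1 := norm_deriv_le_of_injOn hρ hχ hinj (p := b) fun q hq h => by
    apply hb
    rw [← h, hgχ q hq]
    exact hq
  have hw : w ∈ ball w ρ := mem_ball_self hρ
  have hn : ball w ρ ∈ 𝓝 w := isOpen_ball.mem_nhds hw
  have hd : HasDerivAt (g ∘ χ) (deriv g (χ w) * deriv χ w) w :=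
    (hg (χ w)).hasDerivAt.comp w (hχ.differentiableAt hn).hasDerivAt
  have hd' : HasDerivAt (g ∘ χ) 1 w :=
    (hasDerivAt_id w).congr_of_eventuallyEq (by filter_upwards [hn] with q hq using hgχ q hq)
  have h2 : deriv g (χ w) * deriv χ w = 1 := hd.unique hd'
  rw [hχw] at h1 h2
  have h3 : ‖deriv g z‖ * ‖deriv χ w‖ = 1 := by rw [← norm_mul, h2, norm_one]
  have h4 : ‖deriv g z‖ * ‖deriv χ w‖ ≤ ‖deriv g z‖ * (512 / ρ * ‖z - b‖) := by gcongr
  rw [h3] at h4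
  have h5 : ‖deriv g z‖ * (512 / ρ * ‖z - b‖) = 512 * (‖deriv g z‖ * ‖z - b‖) / ρ := by
    field_simp
  rw [h5, le_div_iff₀ hρ] at h4
  linarith

/-- On small balls of a wandering domain, the iterates which stay bounded have small
derivatives. -/
theorem exists_ball_norm_deriv_iterate_le (hf : Differentiable ℂ f) (hWo : IsOpen W)
    (hWF : W ⊆ FatouSet f) (hdisj : ∀ m n : ℕ, m ≠ n → f^[m] '' W ∩ f^[n] '' W = ∅)
    {z : ℂ} (hz : z ∈ W) (M : ℝ) :
    ∃ δ > 0, ball z δ ⊆ W ∧ ∀ β > 0, ∃ N, ∀ n ≥ N, ∀ y' ∈ ball z δ, ‖f^[n] y'‖ ≤ M →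
      ∀ y ∈ ball z δ, ‖f^[n] y‖ ≤ M + 2 ∧ ‖deriv f^[n] y‖ ≤ β := by
  obtain ⟨δ₁, hδ₁, hsph⟩ := exists_ball_sphericalDist_lt (hWF hz)
    (η := 1 / (1 + (|M| + 1)) ^ 2) (by positivity)
  obtain ⟨δ₂, hδ₂, hsub⟩ := Metric.isOpen_iff.1 hWo z hz
  set δ₀ := min δ₁ δ₂ with hδ₀
  have hδ₀0 : 0 < δ₀ := lt_min hδ₁ hδ₂
  have hM := le_abs_self M
  have hbd : ∀ n, ∀ y' ∈ ball z δ₀, ‖f^[n] y'‖ ≤ M → ∀ y ∈ ball z δ₀, ‖f^[n] y‖ ≤ M + 2 := by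
    intro n y' hy' hle y hy
    have h1 := hsph y' (ball_subset_ball (min_le_left _ _) hy') n
    have h2 := hsph y (ball_subset_ball (min_le_left _ _) hy) n
    rw [sphericalDist_comm] at h1
    have h3 := dist_lt_one_of_sphericalDist_lt (by linarith) h1
    have h4 : ‖f^[n] z‖ ≤ M + 1 := by
      have := norm_le_norm_add_norm_sub (f^[n] y') (f^[n] z)
      rw [← dist_eq_norm, dist_comm] at this
      linarith
    have h5 := dist_lt_one_of_sphericalDist_lt (by linarith) h2
    have := norm_le_norm_add_norm_sub (f^[n] z) (f^[n] y)
    rw [← dist_eq_norm, dist_comm] at this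
    linarith
  refine ⟨δ₀ / 2, by positivity, (ball_subset_ball (by
    have : δ₀ ≤ δ₂ := min_le_right _ _
    linarith)).trans hsub, fun β hβ => ?_⟩
  have hhalf : ball z (δ₀ / 2) ⊆ ball z δ₀ := ball_subset_ball (by linarith)
  by_contra! hcon
  have hfreq : ∃ᶠ n in atTop, ∃ p, ball p (δ₀ / 2 * β / 128) ⊆ f^[n] '' ball z δ₀ ∧
      p ∈ closedBall (0 : ℂ) (M + 2) := by
    rw [frequently_atTop]
    intro N
    obtain ⟨n, hn, y', hy', hle, y, hy, himp⟩ := hcon N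
    refine ⟨n, hn, ?_⟩
    have hd := himp (hbd n y' (hhalf hy') hle y (hhalf hy))
    obtain ⟨p, hp⟩ := exists_ball_subset_image_of_differentiableOn (x := y) (ρ := δ₀ / 2)
      (hf.iterate n).differentiableOn
    have hyball : ball y (δ₀ / 2) ⊆ ball z δ₀ :=
      ball_subset_ball' (by rw [mem_ball] at hy; linarith)
    have hp' : ball p (δ₀ / 2 * β / 128) ⊆ f^[n] '' ball z δ₀ :=
      (ball_subset_ball (by gcongr)).trans (hp.trans (image_mono hyball))
    refine ⟨p, hp', ?_⟩
    obtain ⟨x, hx, hxp⟩ := hp' (mem_ball_self (by positivity))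
    rw [mem_closedBall_zero_iff, ← hxp]
    exact hbd n y' (hhalf hy') hle x hx
  obtain ⟨φ, hφ, hφp⟩ := Filter.extraction_of_frequently_atTop hfreq
  choose p hp hpb using hφp
  obtain ⟨a, -, ψ, hψ, hlim⟩ := (isCompact_closedBall (0 : ℂ) (M + 2)).tendsto_subseq hpb
  obtain ⟨k, hk⟩ := Metric.cauchySeq_iff.1 hlim.cauchySeq (δ₀ / 2 * β / 128) (by positivity)
  have h1 := hk k le_rfl (k + 1) (by omega)
  have hne : φ (ψ k) ≠ φ (ψ (k + 1)) := (hφ (hψ (Nat.lt_succ_self k))).ne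
  have h2 := hp (ψ (k + 1)) h1
  have h3 := hp (ψ k) (mem_ball_self (by positivity))
  have hW : ball z δ₀ ⊆ W := (ball_subset_ball (min_le_right _ _)).trans hsub
  have := hdisj _ _ hne
  exact (eq_empty_iff_forall_notMem.1 this) (p (ψ k)) ⟨image_mono hW h3, image_mono hW h2⟩

/-- Two orbits in a wandering domain are asymptotic along times at which one is bounded. -/
theorem dist_iterate_le_of_wandering (hf : Differentiable ℂ f) (hWo : IsOpen W)
    (hWF : W ⊆ FatouSet f) (hdisj : ∀ m n : ℕ, m ≠ n → f^[m] '' W ∩ f^[n] '' W = ∅)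
    (hWc : IsPreconnected W) {z₀ z : ℂ} (hz₀ : z₀ ∈ W) (hz : z ∈ W) (M : ℝ) {β : ℝ}
    (hβ : 0 < β) :
    ∃ N, ∀ n ≥ N, ‖f^[n] z₀‖ ≤ M → dist (f^[n] z) (f^[n] z₀) ≤ β := by
  set T : Set ℂ := {z | z ∈ W ∧ ∀ β > 0, ∃ N, ∀ n ≥ N, ‖f^[n] z₀‖ ≤ M →
    dist (f^[n] z) (f^[n] z₀) ≤ β} with hT
  have key : ∀ x ∈ W, ∃ δ > 0, ∀ y ∈ ball x δ, y ∈ T → ball x δ ⊆ T := by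
    intro x hx
    obtain ⟨δ, hδ, hsub, h⟩ := exists_ball_norm_deriv_iterate_le hf hWo hWF hdisj hx (M + 1)
    refine ⟨δ, hδ, fun y hy hyT x' hx' => ⟨hsub hx', fun β hβ => ?_⟩⟩
    obtain ⟨N₁, hN₁⟩ := hyT.2 (min (β / 2) 1) (by positivity)
    obtain ⟨N₂, hN₂⟩ := h (β / (4 * δ)) (by positivity)
    refine ⟨max N₁ N₂, fun n hn hnM => ?_⟩
    have h1 := hN₁ n (le_of_max_le_left hn) hnM
    have h2 : ‖f^[n] y‖ ≤ M + 1 := by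
      have := norm_le_norm_add_norm_sub (f^[n] z₀) (f^[n] y)
      rw [← dist_eq_norm, dist_comm] at this
      linarith [h1.trans (min_le_right _ _)]
    have h3 := hN₂ n (le_of_max_le_right hn) y hy h2
    have h4 := (convex_ball x δ).norm_image_sub_le_of_norm_deriv_le (𝕜 := ℂ) (f := f^[n])
      (fun v _ => (hf.iterate n) v) (fun v hv => (h3 v hv).2) hy hx'
    have h5 : ‖x' - y‖ ≤ 2 * δ := by
      rw [← dist_eq_norm]
      have := dist_triangle_right x' y x
      rw [mem_ball] at hy hx'
      linarith
    calc dist (f^[n] x') (f^[n] z₀) ≤ dist (f^[n] x') (f^[n] y) + dist (f^[n] y) (f^[n] z₀) :=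
          dist_triangle _ _ _
      _ ≤ β / (4 * δ) * (2 * δ) + β / 2 := by
          gcongr
          · rw [dist_eq_norm]
            exact h4.trans (by gcongr)
          · exact h1.trans (min_le_left _ _)
      _ = β := by field_simp; ring
  have hTo : IsOpen T := by
    rw [Metric.isOpen_iff]
    intro x hx
    obtain ⟨δ, hδ, h⟩ := key x hx.1
    exact ⟨δ, hδ, h x (mem_ball_self hδ) hx⟩
  have hsub : W ⊆ T := by
    refine hWc.subset_of_closure_inter_subset hTo ⟨z₀, hz₀, hz₀, fun β hβ => ⟨0, fun n _ _ => ?_⟩⟩ ?_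
    · rw [dist_self]; exact hβ.le
    · rintro x ⟨hx, hxW⟩
      obtain ⟨δ, hδ, h⟩ := key x hxW
      obtain ⟨y, hyT, hy⟩ := Metric.mem_closure_iff.1 hx δ hδ
      exact h y (by rwa [mem_ball, dist_comm]) hyT (mem_ball_self hδ)
  exact (hsub hz).2 β hβ

/-- The bounded part of an orbit in a wandering domain accumulates at the postsingular set. -/
theorem exists_postsingular_dist_lt (hf : TranscendentalEntire f) (hcov : IsCoveringMapOn f Sᶜ)
    (hWo : IsOpen W) (hWF : W ⊆ FatouSet f)
    (hdisj : ∀ m n : ℕ, m ≠ n → f^[m] '' W ∩ f^[n] '' W = ∅) {z₀ : ℂ} (hz₀ : z₀ ∈ W) (M : ℝ)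
    {β : ℝ} (hβ : 0 < β) :
    ∃ N, ∀ n ≥ N, ‖f^[n] z₀‖ ≤ M → ∃ s ∈ S, ∃ j, dist (f^[j] s) (f^[n] z₀) < β := by
  obtain ⟨s, hs⟩ := hf.singularSet_nonempty hcov
  obtain ⟨δ, hδ, -, h⟩ := exists_ball_norm_deriv_iterate_le hf.1 hWo hWF hdisj hz₀ M
  obtain ⟨N, hN⟩ := h (β / (1024 * (‖z₀ - s‖ + 1))) (by positivity)
  refine ⟨N, fun n hn hnM => ?_⟩
  by_contra! hcon
  set B : Set ℂ := {x | ∃ s ∈ S, ∃ j, f^[j] s = x} with hB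
  obtain ⟨χ, hχd, hχ0, hχ, -⟩ := exists_iterate_lift (z₀ := z₀) (B := B) hf.1 hcov
    (fun s hs => ⟨s, hs, 0, rfl⟩)
    (by
      rintro _ ⟨s, hs, j, rfl⟩
      exact ⟨s, hs, j + 1, Function.iterate_succ_apply' f j s⟩)
    isOpen_ball (convex_ball (f^[n] z₀) β) n differentiableOn_id
    (by
      rintro q hq ⟨s, hs, j, rfl⟩
      exact absurd (mem_ball.1 hq) (not_lt.2 (hcon s hs j)))
    (mem_ball_self hβ) rfl
  have h1 := le_mul_norm_deriv_of_inverse (hf.1.iterate n) hβ hχd hχ0 hχ (b := s)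
    (fun h => absurd (mem_ball.1 h) (not_lt.2 (hcon s hs n)))
  have h2 := (hN n hn z₀ (mem_ball_self hδ) hnM z₀ (mem_ball_self hδ)).2
  have h3 : ‖deriv f^[n] z₀‖ * ‖z₀ - s‖ ≤ β / (1024 * (‖z₀ - s‖ + 1)) * (‖z₀ - s‖ + 1) := by
    gcongr
    linarith
  have h4 : β / (1024 * (‖z₀ - s‖ + 1)) * (‖z₀ - s‖ + 1) = β / 1024 := by field_simp
  linarith

/-- An orbit in a wandering domain returns to a bounded region from arbitrarily far away. -/
theorem exists_return_from_infinity (hf : TranscendentalEntire f) (hcov : IsCoveringMapOn f Sᶜ)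
    (hSb : Bornology.IsBounded S) (hesc : ∀ M : ℝ, ∃ N : ℕ, ∀ n ≥ N, ∀ s ∈ S, M ≤ ‖f^[n] s‖)
    (hWo : IsOpen W) (hWF : W ⊆ FatouSet f)
    (hdisj : ∀ m n : ℕ, m ≠ n → f^[m] '' W ∩ f^[n] '' W = ∅) {z₀ : ℂ} (hz₀ : z₀ ∈ W) :
    ∃ M : ℝ, ∀ (T : ℝ) (N : ℕ), ∃ m ≥ N, ‖f^[m + 1] z₀‖ ≤ M ∧ T ≤ ‖f^[m] z₀‖ := by
  have hnot := not_tendsto_norm_iterate_of_mem_fatouSet hf hcov hSb (hWF hz₀)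
  rw [Filter.tendsto_atTop] at hnot
  push Not at hnot
  obtain ⟨M₀, hM₀⟩ := hnot
  rw [frequently_atTop] at hM₀
  by_contra! hcon
  have hback : ∀ i : ℕ, ∃ (T : ℝ) (N : ℕ), ∀ m ≥ N, ‖f^[m + i] z₀‖ ≤ M₀ → ‖f^[m] z₀‖ ≤ T := by
    intro i
    induction i with
    | zero => exact ⟨M₀, 0, fun m _ h => h⟩
    | succ i ih =>
      obtain ⟨T, N, h⟩ := ih
      obtain ⟨T', N', h'⟩ := hcon T
      refine ⟨T', max N N', fun m hm hle => (h' m (le_of_max_le_right hm) ?_).le⟩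
      refine h (m + 1) (by have := le_of_max_le_left hm; omega) ?_
      rwa [show m + 1 + i = m + (i + 1) by omega]
  obtain ⟨i, hi⟩ := hesc (M₀ + 2)
  obtain ⟨T, N, hT⟩ := hback i
  have huc := (isCompact_closedBall (0 : ℂ) (T + 1)).uniformContinuousOn_of_continuous
    (hf.1.iterate i).continuous.continuousOn
  obtain ⟨β, hβ, hβu⟩ := Metric.uniformContinuousOn_iff.1 huc 1 one_pos
  obtain ⟨N', hN'⟩ := exists_postsingular_dist_lt hf hcov hWo hWF hdisj hz₀ T
    (β := min β 1) (by positivity)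
  obtain ⟨n, hn, hnM⟩ := hM₀ (N + N' + i)
  obtain ⟨m, rfl⟩ : ∃ m, n = m + i := ⟨n - i, by omega⟩
  have h1 := hT m (by omega) hnM.le
  obtain ⟨s, hs, j, hj⟩ := hN' m (by omega) h1
  have h2 : ‖f^[j] s‖ ≤ T + 1 := by
    have := norm_le_norm_add_norm_sub (f^[m] z₀) (f^[j] s)
    rw [← dist_eq_norm, dist_comm] at this
    linarith [hj.trans_le (min_le_right _ _)]
  have h3 := hβu (f^[j] s) (by simpa using h2) (f^[m] z₀) (by simp; linarith)
    (hj.trans_le (min_le_left _ _))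
  rw [← Function.iterate_add_apply, ← Function.iterate_add_apply, add_comm i m] at h3
  have h4 := hi (i + j) (by omega) s hs
  have h5 := norm_le_norm_add_norm_sub (f^[m + i] z₀) (f^[i + j] s)
  rw [← dist_eq_norm, dist_comm] at h5
  linarith

end Wandering

section Sector

variable {f : ℂ → ℂ} {S W A : Set ℂ}

/-- A set all of whose components are unbounded meets all large enough circles. -/
theorem exists_mem_norm_sub_eq (hA : ∀ z ∈ A, ¬Bornology.IsBounded (connectedComponentIn A z))
    {a b : ℂ} {t : ℝ} (ha : a ∈ A) (ht : ‖a - b‖ ≤ t) : ∃ z ∈ A, ‖z - b‖ = t := by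
  obtain ⟨x, hx, hxt⟩ : ∃ x ∈ connectedComponentIn A a, t < ‖x - b‖ := by
    by_contra! h
    refine hA a ha ((isBounded_closedBall (x := b) (r := t)).subset fun x hx => ?_)
    rw [mem_closedBall, dist_eq_norm]
    exact h x hx
  obtain ⟨z, hz, hzt⟩ := isPreconnected_connectedComponentIn.intermediate_value
    (mem_connectedComponentIn ha) hx (f := fun z => ‖z - b‖) (by fun_prop) ⟨ht, hxt.le⟩
  exact ⟨z, connectedComponentIn_subset _ _ hz, hzt⟩

theorem iterate_mem_of_image_subset (hSA : S ⊆ A) (hfA : f '' A ⊆ A) {s : ℂ} (hs : s ∈ S) (j : ℕ) :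
    f^[j] s ∈ A :=
  (mapsTo_iff_image_subset.2 hfA).iterate j (hSA hs)

/-- Far away points with bounded image are at a proportional distance from the postsingular
set. -/
theorem exists_mul_norm_le_dist_postsingular (hf : Differentiable ℂ f) (hSne : S.Nonempty)
    (hSb : Bornology.IsBounded S) (hesc : ∀ M : ℝ, ∃ N : ℕ, ∀ n ≥ N, ∀ s ∈ S, M ≤ ‖f^[n] s‖)
    (hSA : S ⊆ A) (hfA : f '' A ⊆ A) {ε c R : ℝ} (hε : 0 < ε) (hc : c ∈ Ioo (0 : ℝ) 1)
    (hR : 0 < R)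
    (hsector : ∀ z ∈ A, R ≤ ‖z‖ → ∀ w : ℂ, ‖w - z‖ < c * ‖z‖ → ε < infDist (f w) S) (M : ℝ) :
    ∃ κ > 0, ∃ R' : ℝ, ∀ w, R' ≤ ‖w‖ → ‖f w‖ ≤ M → ∀ s ∈ S, ∀ j : ℕ,
      κ * ‖w‖ ≤ dist (f^[j] s) w := by
  obtain ⟨hc0, hc1⟩ := hc
  obtain ⟨s₀, hs₀⟩ := hSne
  set D := |M| + ‖s₀‖ + 1 with hD
  have hD0 : 0 < D := by positivity
  obtain ⟨N, hN⟩ := hesc (2 * D + ‖s₀‖)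
  have hbd : ∀ k : ℕ, ∃ L : ℝ, ∀ j < k, ∀ s ∈ S, ‖f^[j] s‖ ≤ L := by
    intro k
    induction k with
    | zero => exact ⟨0, by simp⟩
    | succ k ih =>
      obtain ⟨L, hL⟩ := ih
      obtain ⟨R₀, hR₀⟩ := hSb.exists_norm_le
      obtain ⟨L', hL'⟩ := (isCompact_closedBall (0 : ℂ) R₀).exists_bound_of_continuousOn
        (hf.iterate k).continuous.continuousOn
      refine ⟨max L L', fun j hj s hs => ?_⟩
      rcases Nat.lt_succ_iff_lt_or_eq.1 hj with h | rfl
      · exact (hL j h s hs).trans (le_max_left _ _)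
      · exact (hL' s (by simpa using hR₀ s hs)).trans (le_max_right _ _)
  obtain ⟨L, hL⟩ := hbd N
  refine ⟨min (c / 4) (ε * c / (16 * D)), by positivity, max (2 * L + 1) (2 * R), ?_⟩
  intro w hw hwM s hs j
  by_contra! hlt
  set p := f^[j] s with hp
  have hw1 : 2 * L + 1 ≤ ‖w‖ := (le_max_left _ _).trans hw
  have hw2 : 2 * R ≤ ‖w‖ := (le_max_right _ _).trans hw
  have hw0 : 0 < ‖w‖ := by linarith
  have hd1 : dist p w < c / 4 * ‖w‖ := hlt.trans_le (by gcongr; exact min_le_left _ _)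
  have hd2 : dist p w < ε * c / (16 * D) * ‖w‖ :=
    hlt.trans_le (by gcongr; exact min_le_right _ _)
  have hpw : ‖w‖ / 2 < ‖p‖ := by
    have := norm_le_norm_add_norm_sub p w
    rw [← dist_eq_norm] at this
    nlinarith
  have hjN : N ≤ j := by
    by_contra! h
    linarith [hL j h s hs]
  have hfp : 2 * D + ‖s₀‖ ≤ ‖f p‖ := by
    rw [hp, ← Function.iterate_succ_apply' f]
    exact hN _ (by omega) s hs
  have hsec := hsector p (iterate_mem_of_image_subset hSA hfA hs j) (by linarith)
  have hfar : ∀ x ∈ ball p (c * ‖p‖), ε < ‖f x - s₀‖ := by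
    intro x hx
    rw [mem_ball, dist_eq_norm] at hx
    refine (hsec x hx).trans_le ?_
    rw [← dist_eq_norm]
    exact infDist_le_dist_of_mem hs₀
  have hp0 : 0 < c * ‖p‖ := mul_pos hc0 (by linarith)
  set g : ℂ → ℂ := fun x => (f x - s₀)⁻¹ with hg
  have hgd : DifferentiableOn ℂ g (ball p (c * ‖p‖)) := fun x hx =>
    (((hf x).sub_const s₀).inv (norm_pos_iff.1 (hε.trans (hfar x hx)))).differentiableWithinAt
  have hgb : ∀ x ∈ ball p (c * ‖p‖), ‖g x‖ ≤ ε⁻¹ := fun x hx => by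
    simp only [hg, norm_inv]
    exact inv_anti₀ hε (hfar x hx).le
  have hmaps : MapsTo g (ball p (c * ‖p‖)) (closedBall (g p) (2 * ε⁻¹)) := fun x hx => by
    rw [mem_closedBall, dist_eq_norm]
    refine (norm_sub_le _ _).trans ?_
    linarith [hgb x hx, hgb p (mem_ball_self hp0)]
  have hwb : w ∈ ball p (c * ‖p‖) := by
    rw [mem_ball, dist_comm]
    nlinarith [mul_pos hc0 (sub_pos.2 hpw)]
  have h1 := Complex.dist_le_div_mul_dist_of_mapsTo_ball hgd hmaps hwb
  have h2 : ‖g p‖ ≤ (2 * D)⁻¹ := by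
    simp only [hg, norm_inv]
    refine inv_anti₀ (by positivity) ?_
    have := norm_sub_norm_le (f p) s₀
    linarith
  have h3 : D⁻¹ ≤ ‖g w‖ := by
    simp only [hg, norm_inv]
    refine inv_anti₀ (hε.trans (hfar w hwb)) ((norm_sub_le _ _).trans ?_)
    linarith [le_abs_self M]
  have h4 : ‖g w‖ ≤ ‖g p‖ + dist (g w) (g p) := by
    rw [dist_eq_norm]
    exact norm_le_norm_add_norm_sub' _ _
  have h5 : 2 * ε⁻¹ / (c * ‖p‖) * dist w p ≤
      2 * ε⁻¹ / (c * (‖w‖ / 2)) * (ε * c / (16 * D) * ‖w‖) := by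
    rw [dist_comm]
    gcongr
  have h6 : 2 * ε⁻¹ / (c * (‖w‖ / 2)) * (ε * c / (16 * D) * ‖w‖) = D⁻¹ / 4 := by
    field_simp
    norm_num
  have h7 : (2 * D)⁻¹ = D⁻¹ / 2 := by rw [mul_inv]; ring
  have h8 : 0 < D⁻¹ := by positivity
  linarith

theorem TranscendentalEntire.exists_lt_norm (hf : TranscendentalEntire f) (M : ℝ) :
    ∃ a, M < ‖f a‖ := by
  by_contra! h
  refine hf.2 ⟨Polynomial.C (f 0), fun z => ?_⟩
  rw [Polynomial.eval_C]
  refine hf.1.apply_eq_apply_of_bounded ((isBounded_closedBall (x := (0 : ℂ)) (r := M)).subset ?_)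
    z 0
  rintro _ ⟨x, rfl⟩
  simpa using h x

/-- A wandering orbit returning from far away to a bounded region comes close to the singular
set. -/
theorem infDist_lt_of_return (hf : TranscendentalEntire f) (hcov : IsCoveringMapOn f Sᶜ)
    (hSb : Bornology.IsBounded S) (hesc : ∀ M : ℝ, ∃ N : ℕ, ∀ n ≥ N, ∀ s ∈ S, M ≤ ‖f^[n] s‖)
    (hSA : S ⊆ A) (hfA : f '' A ⊆ A) {ε c R : ℝ} (hε : 0 < ε) (hc : c ∈ Ioo (0 : ℝ) 1)
    (hR : 0 < R)
    (hsector : ∀ z ∈ A, R ≤ ‖z‖ → ∀ w : ℂ, ‖w - z‖ < c * ‖z‖ → ε < infDist (f w) S)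
    (hWo : IsOpen W) (hWF : W ⊆ FatouSet f)
    (hdisj : ∀ m n : ℕ, m ≠ n → f^[m] '' W ∩ f^[n] '' W = ∅) {z₀ : ℂ} (hz₀ : z₀ ∈ W) (M : ℝ) :
    ∃ (T : ℝ) (N : ℕ), ∀ m ≥ N, T ≤ ‖f^[m] z₀‖ → ‖f^[m + 1] z₀‖ ≤ M →
      infDist (f^[m + 1] z₀) S < ε := by
  have hSne := hf.singularSet_nonempty hcov
  obtain ⟨s, hs⟩ := hSne
  obtain ⟨κ, hκ, R', hκR⟩ := exists_mul_norm_le_dist_postsingular hf.1 ⟨s, hs⟩ hSb hesc hSA hfA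
    hε hc hR hsector M
  obtain ⟨a, ha⟩ := hf.exists_lt_norm (M + ε)
  obtain ⟨δ, hδ, -, h⟩ := exists_ball_norm_deriv_iterate_le hf.1 hWo hWF hdisj hz₀ M
  obtain ⟨N, hN⟩ := h (κ * ε / (2 ^ 20 * (‖z₀ - s‖ + 1))) (by positivity)
  refine ⟨max R' (max ‖a‖ 1), N, fun m hm hT hM => ?_⟩
  by_contra! hcon
  set w := f^[m] z₀ with hw
  rw [Function.iterate_succ_apply', ← hw] at hM hcon
  have hw1 : R' ≤ ‖w‖ := (le_max_left _ _).trans hT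
  have hw2 : ‖a‖ ≤ ‖w‖ := ((le_max_left _ _).trans (le_max_right _ _)).trans hT
  have hw3 : 1 ≤ ‖w‖ := ((le_max_right _ _).trans (le_max_right _ _)).trans hT
  have hP := hκR w hw1 hM
  set B : Set ℂ := {x | ∃ s ∈ S, ∃ j, f^[j] s = x} with hB
  have hr : 0 < κ * ‖w‖ := by positivity
  obtain ⟨χ, hχd, hχ0, hχ, -⟩ := exists_iterate_lift (z₀ := z₀) (B := B) hf.1 hcov
    (fun s hs => ⟨s, hs, 0, rfl⟩)
    (by
      rintro _ ⟨s, hs, j, rfl⟩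
      exact ⟨s, hs, j + 1, Function.iterate_succ_apply' f j s⟩)
    isOpen_ball (convex_ball w (κ * ‖w‖)) m differentiableOn_id
    (by
      rintro q hq ⟨s, hs, j, rfl⟩
      exact absurd (mem_ball.1 hq) (not_lt.2 (hP s hs j)))
    (mem_ball_self hr) rfl
  have h1 := le_mul_norm_deriv_of_inverse (hf.1.iterate m) hr hχd hχ0 hχ (b := s)
    (fun h => absurd (mem_ball.1 h) (not_lt.2 (hP s hs m)))
  obtain ⟨ψ, hψd, hψ0, hψ⟩ := exists_lift (z₀ := w) hf.1 hcov isOpen_ball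
    (convex_ball (f w) ε) (e := id) differentiableOn_id (by
      intro q hq hqS
      have := infDist_le_dist_of_mem (x := f w) hqS
      rw [mem_ball, dist_comm] at hq
      exact absurd hq (not_lt.2 (hcon.trans this))) (mem_ball_self hε) rfl
  have h2 := le_mul_norm_deriv_of_inverse hf.1 hε hψd hψ0 hψ (b := a) (fun h => by
    rw [mem_ball, dist_eq_norm] at h
    have := norm_sub_norm_le (f a) (f w)
    linarith)
  have h3 : ‖w - a‖ ≤ 2 * ‖w‖ := (norm_sub_le _ _).trans (by linarith)
  have h4 := (hN (m + 1) (by omega) z₀ (mem_ball_self hδ)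
    (by rw [Function.iterate_succ_apply']; exact hM) z₀ (mem_ball_self hδ)).2
  rw [deriv_iterate_succ' hf.1, norm_mul, ← hw] at h4
  set d₁ := ‖deriv f w‖
  set d₂ := ‖deriv f^[m] z₀‖
  set Z := ‖z₀ - s‖ + 1 with hZ
  have hZ0 : 0 < Z := by positivity
  have h5 : κ * ‖w‖ * ε ≤ 512 * (d₂ * Z) * (512 * (d₁ * (2 * ‖w‖))) := by
    refine mul_le_mul (h1.trans ?_) (h2.trans ?_) hε.le (by positivity)
    · gcongr; linarith
    · gcongr
  have h6 : 512 * (d₂ * Z) * (512 * (d₁ * (2 * ‖w‖))) = 2 ^ 19 * (d₁ * d₂) * Z * ‖w‖ := by ring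
  have h7 : 2 ^ 19 * (d₁ * d₂) * Z * ‖w‖ ≤ 2 ^ 19 * (κ * ε / (2 ^ 20 * Z)) * Z * ‖w‖ := by gcongr
  have h8 : 2 ^ 19 * (κ * ε / (2 ^ 20 * Z)) * Z * ‖w‖ = κ * ‖w‖ * ε / 2 := by
    field_simp
  have h9 : 0 < κ * ‖w‖ * ε := by positivity
  linarith

/-- The first time at which a continuous function comes down to a given value. -/
theorem exists_first_eq {φ : ℝ → ℝ} (hφ : Continuous φ) {b v : ℝ} (hb : 0 ≤ b) (h0 : v ≤ φ 0)
    (h1 : φ b ≤ v) : ∃ θ ∈ Icc 0 b, φ θ = v ∧ ∀ t ∈ Icc 0 θ, v ≤ φ t := by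
  have hne : (Icc 0 b ∩ φ ⁻¹' {v}).Nonempty := by
    obtain ⟨x, hx, hxv⟩ := intermediate_value_Icc' hb hφ.continuousOn ⟨h1, h0⟩
    exact ⟨x, hx, hxv⟩
  have hcpt : IsCompact (Icc 0 b ∩ φ ⁻¹' {v}) :=
    isCompact_Icc.inter_right (isClosed_singleton.preimage hφ)
  have hmem := hcpt.sInf_mem hne
  refine ⟨_, hmem.1, hmem.2, fun t ht => ?_⟩
  by_contra! hlt
  obtain ⟨x, hx, hxv⟩ := intermediate_value_Icc' ht.1 hφ.continuousOn ⟨hlt.le, h0⟩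
  have := csInf_le hcpt.bddBelow (show x ∈ Icc 0 b ∩ φ ⁻¹' {v} from
    ⟨⟨hx.1, hx.2.trans (ht.2.trans hmem.1.2)⟩, hxv⟩)
  have hxt : x = t := le_antisymm hx.2 (ht.2.trans this)
  rw [hxt] at hxv
  exact hlt.ne hxv

/-- Rotating a point which is mapped near `S` until it first comes close to `A`. -/
theorem exists_arc_avoiding (hA : IsClosed A) {ε c R : ℝ} (hc : c ∈ Ioo (0 : ℝ) 1) (hR : 0 < R)
    (hsector : ∀ z ∈ A, R ≤ ‖z‖ → ∀ w : ℂ, ‖w - z‖ < c * ‖z‖ → ε < infDist (f w) S)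
    {u : ℂ} (hu : 2 * R ≤ ‖Complex.exp u‖) (hclose : infDist (f (Complex.exp u)) S ≤ ε)
    (hcirc : ∃ a ∈ A, ‖a‖ = ‖Complex.exp u‖) :
    ∃ θ ∈ Icc (0 : ℝ) 7, ε < infDist (f (Complex.exp (u + θ * Complex.I))) S ∧
      ∀ t ∈ Icc (0 : ℝ) θ, ∀ q ∈ ball (u + t * Complex.I) (c / 8), Complex.exp q ∉ A := by
  obtain ⟨hc0, hc1⟩ := hc
  set r := ‖Complex.exp u‖ with hr
  have hr0 : 0 < r := by linarith
  obtain ⟨a, haA, ha⟩ := hcirc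
  have hnorm : ∀ t : ℝ, ‖Complex.exp (u + t * Complex.I)‖ = r := fun t => by
    rw [hr, Complex.norm_exp, Complex.norm_exp]; simp
  have hsec : ∀ (t : ℝ), ∀ x ∈ A, dist (Complex.exp (u + t * Complex.I)) x ≤ c * r / 4 →
      ε < infDist (f (Complex.exp (u + t * Complex.I))) S := by
    intro t x hx hd
    have h1 := norm_le_norm_add_norm_sub x (Complex.exp (u + t * Complex.I))
    rw [← dist_eq_norm, hnorm, dist_comm] at h1
    have h2 : 3 / 4 * r < ‖x‖ := by nlinarith [mul_pos hr0 (sub_pos.2 hc1)]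
    refine hsector x hx (by linarith) _ ?_
    rw [← dist_eq_norm]
    nlinarith [mul_pos hc0 (sub_pos.2 h2), mul_pos hc0 hr0]
  set φ : ℝ → ℝ := fun t => infDist (Complex.exp (u + t * Complex.I)) A with hφ
  have hφc : Continuous φ := (continuous_infDist_pt A).comp (by fun_prop)
  have hφ0 : c * r / 4 ≤ φ 0 := by
    by_contra! h
    obtain ⟨x, hx, hd⟩ := (infDist_lt_iff ⟨a, haA⟩).1 h
    have := hsec 0 x hx hd.le
    simp only [Complex.ofReal_zero, zero_mul, add_zero] at this
    linarith
  obtain ⟨b, hb, hba⟩ : ∃ b ∈ Icc (0 : ℝ) 7, Complex.exp (u + b * Complex.I) = a := by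
    have hq : ‖a / Complex.exp u‖ = 1 := by rw [norm_div, ha, div_self hr0.ne']
    set α := (a / Complex.exp u).arg with hα
    have h1 : Complex.exp (α * Complex.I) = a / Complex.exp u := by
      have := Complex.norm_mul_exp_arg_mul_I (a / Complex.exp u)
      rwa [hq, Complex.ofReal_one, one_mul] at this
    have hpi := Real.pi_lt_d2
    rcases le_or_gt 0 α with h | h
    · refine ⟨α, ⟨h, by linarith [Complex.arg_le_pi (a / Complex.exp u)]⟩, ?_⟩
      rw [Complex.exp_add, h1, mul_div_cancel₀ _ (Complex.exp_ne_zero u)]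
    · refine ⟨α + 2 * Real.pi, ⟨by linarith [Complex.neg_pi_lt_arg (a / Complex.exp u)],
        by linarith⟩, ?_⟩
      rw [Complex.exp_add]
      push_cast
      rw [add_mul, Complex.exp_add, Complex.exp_two_pi_mul_I, mul_one, h1,
        mul_div_cancel₀ _ (Complex.exp_ne_zero u)]
  have hφb : φ b ≤ c * r / 4 := by
    simp only [hφ]
    rw [hba, infDist_zero_of_mem haA]
    positivity
  obtain ⟨θ, hθ, hθv, hθt⟩ := exists_first_eq hφc hb.1 hφ0 hφb
  refine ⟨θ, ⟨hθ.1, hθ.2.trans hb.2⟩, ?_, fun t ht q hq hqA => ?_⟩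
  · obtain ⟨x, hx, hd⟩ := hA.exists_infDist_eq_dist ⟨a, haA⟩ (Complex.exp (u + θ * Complex.I))
    exact hsec θ x hx (by rw [← hd]; exact hθv.le)
  · have h1 := hθt t ht
    have h2 : φ t ≤ dist (Complex.exp (u + t * Complex.I)) (Complex.exp q) :=
      infDist_le_dist_of_mem hqA
    rw [mem_ball, dist_eq_norm] at hq
    set h := q - (u + t * Complex.I) with hh
    have h3 : Complex.exp q - Complex.exp (u + t * Complex.I) =
        Complex.exp (u + t * Complex.I) * (Complex.exp h - 1) := by
      rw [mul_sub, ← Complex.exp_add, hh]; ring_nf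
    rw [dist_comm, dist_eq_norm, h3, norm_mul, hnorm] at h2
    have h4 := Complex.norm_exp_sub_one_le (x := h) (by linarith)
    nlinarith

end Sector

section Chain

variable {f : ℂ → ℂ} {S A : Set ℂ}

/-- A Harnack type inequality for functions omitting a set which meets all circles about one of
its points. -/
theorem norm_sub_le_mul_exp_of_omits {U V K : Set ℂ} {g : ℂ → ℂ} {a x y : ℂ} {ρ ℓ : ℝ}
    (hUo : IsOpen U) (hUc : Convex ℝ U) (hg : DifferentiableOn ℂ g U) (ha : a ∈ K)
    (hK : ∀ t > 0, ∃ z ∈ K, ‖z - a‖ = t) (homit : ∀ z ∈ U, g z ∉ K) (hVc : Convex ℝ V)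
    (hρ : 0 < ρ) (hV : ∀ x ∈ V, ball x ρ ⊆ U) (hx : x ∈ V) (hy : y ∈ V) (hℓ : ‖y - x‖ ≤ ℓ) :
    ‖g y - a‖ ≤ ‖g x - a‖ * Real.exp (512 / ρ * ℓ) := by
  obtain ⟨L, hLd, hLe, hL⟩ := exists_log_of_omits hUo hUc hg ha hK homit
  have hVU : ∀ x ∈ V, x ∈ U := fun x hx => hV x hx (mem_ball_self hρ)
  have h1 := hVc.norm_image_sub_le_of_norm_deriv_le (𝕜 := ℂ) (f := L) (C := 512 / ρ)
    (fun v hv => hLd.differentiableAt (hUo.mem_nhds (hVU v hv)))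
    (fun v hv => hL v ρ hρ (hV v hv)) hx hy
  have h2 : g y - a = (g x - a) * Complex.exp (L y - L x) := by
    rw [← hLe y (hVU y hy), ← hLe x (hVU x hx), ← Complex.exp_add]
    congr 1
    ring
  rw [h2, norm_mul]
  gcongr
  refine (Complex.norm_exp_le_exp_norm _).trans (Real.exp_le_exp.2 (h1.trans ?_))
  gcongr

/-- A Harnack type lower bound for bounded functions without zeros. -/
theorem exists_le_norm_of_ne_zero {B τ ρ : ℝ} (hB : 0 < B) (hτ : 0 < τ) (hρ : 0 < ρ) (ℓ : ℝ) :
    ∃ τ' > 0, ∀ (U V : Set ℂ) (g : ℂ → ℂ), IsOpen U → Convex ℝ U → DifferentiableOn ℂ g U →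
      (∀ z ∈ U, g z ≠ 0) → (∀ z ∈ U, ‖g z‖ ≤ B) → Convex ℝ V → (∀ x ∈ V, ball x ρ ⊆ U) →
      ∀ x ∈ V, ∀ y ∈ V, ‖y - x‖ ≤ ℓ → τ ≤ ‖g x‖ → τ' ≤ ‖g y‖ := by
  set X := -Real.log (τ / (2 * B)) + Real.pi with hX
  refine ⟨2 * B * Real.exp (-(X * Real.exp (512 / ρ * ℓ))), by positivity, ?_⟩
  intro U V g hUo hUc hg hg0 hgB hVc hV x hx y hy hℓ hτx
  have hVU : ∀ x ∈ V, x ∈ U := fun x hx => hV x hx (mem_ball_self hρ)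
  have hB2 : (2 * B : ℂ) ≠ 0 := by
    have : (B : ℂ) ≠ 0 := by exact_mod_cast hB.ne'
    simpa using this
  obtain ⟨L₀, hL₀d, hL₀⟩ := exists_exp_eq_of_convex hUo hUc (g := fun z => g z / (2 * B))
    (hg.div_const _) (fun z hz => div_ne_zero (hg0 z hz) hB2)
  set L : ℂ → ℂ := fun z => L₀ z - L₀ x + Complex.log (g x / (2 * B)) with hLdef
  have hLd : DifferentiableOn ℂ L U := (hL₀d.sub_const _).add_const _
  have hgx : g x / (2 * B) ≠ 0 := div_ne_zero (hg0 x (hVU x hx)) hB2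
  have hLe : ∀ z ∈ U, Complex.exp (L z) = g z / (2 * B) := by
    intro z hz
    simp only [hLdef]
    rw [Complex.exp_add, Complex.exp_sub, hL₀ z hz, hL₀ x (hVU x hx), Complex.exp_log hgx,
      div_mul_cancel₀ _ hgx]
  have hnorm : ∀ z ∈ U, Real.exp (L z).re = ‖g z‖ / (2 * B) := by
    intro z hz
    rw [← Complex.norm_exp, hLe z hz, norm_div, norm_mul, Complex.norm_real, Real.norm_eq_abs,
      abs_of_pos hB]
    simp
  have hre : ∀ z ∈ U, (L z).re < 0 := by
    intro z hz
    rw [← Real.exp_lt_one_iff, hnorm z hz, div_lt_one (by positivity)]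
    linarith [hgB z hz]
  have hLx : ‖L x‖ ≤ X := by
    have h1 : L x = Complex.log (g x / (2 * B)) := by simp [hLdef]
    have h2 := Complex.norm_le_abs_re_add_abs_im (L x)
    have h3 : |(L x).im| ≤ Real.pi := by
      rw [h1, Complex.log_im]
      exact Complex.abs_arg_le_pi _
    have h4 : Real.log (τ / (2 * B)) ≤ (L x).re := by
      rw [Real.log_le_iff_le_exp (by positivity), hnorm x (hVU x hx)]
      gcongr
    rw [abs_of_neg (hre x (hVU x hx))] at h2
    linarith
  have h1 := norm_sub_le_mul_exp_of_omits (K := {z : ℂ | 0 ≤ z.re}) (a := 0) hUo hUc hLd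
    (by simp) (fun t ht => ⟨t, by simpa using ht.le, by simp [abs_of_pos ht]⟩)
    (fun z hz h => absurd (hre z hz) (not_lt.2 h)) hVc hρ hV hx hy hℓ
  rw [sub_zero, sub_zero] at h1
  have h2 : ‖L y‖ ≤ X * Real.exp (512 / ρ * ℓ) := h1.trans (by gcongr)
  have h3 : Real.exp (-(X * Real.exp (512 / ρ * ℓ))) ≤ ‖g y‖ / (2 * B) := by
    rw [← hnorm y (hVU y hy), Real.exp_le_exp]
    have := Complex.abs_re_le_norm (L y)
    linarith [neg_abs_le (L y).re]
  rw [le_div_iff₀ (by positivity)] at h3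
  linarith

theorem injOn_exp_ball {q : ℂ} {ρ : ℝ} (hρ : ρ ≤ 1) : InjOn Complex.exp (ball q ρ) := by
  intro x hx y hy hxy
  obtain ⟨n, hn⟩ := Complex.exp_eq_exp_iff_exists_int.1 hxy
  have h1 : dist x y < 2 := by
    have := dist_triangle_right x y q
    rw [mem_ball] at hx hy
    linarith
  rw [dist_eq_norm, hn, add_sub_cancel_left] at h1
  have h2 : |(n : ℝ)| * (2 * Real.pi) < 2 := by
    simpa [abs_of_pos Real.pi_pos] using h1
  have h3 : |(n : ℝ)| < 1 := by nlinarith [Real.pi_gt_three, abs_nonneg (n : ℝ)]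
  have h4 : n = 0 := by
    have : |n| < 1 := by exact_mod_cast h3
    exact Int.abs_lt_one_iff.1 this
  rw [hn, h4]
  simp

/-- Lifting an arc through an iterate of `f` gives either a short arc or a chain of balls whose
orbits avoid `A`, with uniform bounds. -/
theorem exists_chain (hf : Differentiable ℂ f) (hcov : IsCoveringMapOn f Sᶜ) (hSA : S ⊆ A)
    (hfA : MapsTo f A A) {a₀ : ℂ} (ha₀ : a₀ ∈ A) (hA : ∀ t > 0, ∃ z ∈ A, ‖z - a₀‖ = t)
    {ρ δ : ℝ} (hρ : 0 < ρ) (hρ1 : ρ ≤ 1) (hδ : 0 < δ) (z₀ : ℂ) :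
    ∃ (Y ρ' : ℝ) (N : ℕ), 0 < ρ' ∧ ∀ (n : ℕ) (u : ℂ), ∀ θ ∈ Icc (0 : ℝ) 7,
      f^[n] z₀ = Complex.exp u →
      (∀ t ∈ Icc (0 : ℝ) θ, ∀ q ∈ ball (u + t * Complex.I) ρ, Complex.exp q ∉ A) →
      ∃ x : ℕ → ℂ, f^[n] (x N) = Complex.exp (u + θ * Complex.I) ∧ (x N ∈ ball z₀ δ ∨
        x 0 = z₀ ∧ (∀ j ≤ N, ‖x j - a₀‖ ≤ Y ∧ ∀ p ∈ ball (x j) ρ', ∀ i ≤ n, f^[i] p ∉ A) ∧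
        ∀ j < N, dist (x (j + 1)) (x j) ≤ ρ' / 8) := by
  set Y := ‖z₀ - a₀‖ * Real.exp (512 / (ρ / 2) * 8) with hY
  have hY0 : 0 ≤ Y := by positivity
  set B := 512 / (ρ / 2) * Y + 1 with hB
  have hB0 : 0 < B := by positivity
  obtain ⟨τ', hτ', hHar⟩ := exists_le_norm_of_ne_zero hB0 (τ := δ / 8) (by positivity)
    (ρ := ρ / 2) (by positivity) 7
  obtain ⟨N₀, hN₀⟩ := exists_nat_ge (56 * B / (τ' * ρ / 512))
  refine ⟨Y, τ' * ρ / 512, N₀ + 1, by positivity, fun n u θ hθ hnu hav => ?_⟩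
  set V : Set ℂ := {u.re} ×ℂ Icc u.im (u.im + θ) with hV
  have hVc : Convex ℝ V := ((convex_singleton u.re).linear_preimage Complex.reLm).inter
    ((convex_Icc u.im (u.im + θ)).linear_preimage Complex.imLm)
  have hmemV : ∀ t ∈ Icc (0 : ℝ) θ, u + t * Complex.I ∈ V := fun t ht => by
    rw [hV, Complex.mem_reProdIm]
    simpa using ht
  have hVmem : ∀ q ∈ V, ∃ t ∈ Icc (0 : ℝ) θ, u + t * Complex.I = q := by
    intro q hq
    rw [hV, Complex.mem_reProdIm] at hq
    obtain ⟨h1, h2, h3⟩ := hq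
    refine ⟨q.im - u.im, ⟨by linarith, by linarith⟩, ?_⟩
    rw [mem_singleton_iff] at h1
    apply Complex.ext <;> simp [h1]
  have hVdiam : ∀ x ∈ V, ∀ y ∈ V, ‖y - x‖ ≤ θ := by
    intro x hx y hy
    rw [hV, Complex.mem_reProdIm] at hx hy
    obtain ⟨h1, h2, h3⟩ := hx
    obtain ⟨h1', h2', h3'⟩ := hy
    refine (Complex.norm_le_abs_re_add_abs_im _).trans ?_
    rw [mem_singleton_iff] at h1 h1'
    rw [Complex.sub_re, Complex.sub_im, h1, h1', sub_self, abs_zero, zero_add, abs_le]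
    constructor <;> linarith
  have huV : u ∈ V := by simpa using hmemV 0 ⟨le_rfl, hθ.1⟩
  set Q := thickening ρ V with hQ
  set Q' := thickening (ρ / 2) V with hQ'
  have hQo : IsOpen Q := isOpen_thickening
  have hQc : Convex ℝ Q := hVc.thickening ρ
  have hQ'c : Convex ℝ Q' := hVc.thickening (ρ / 2)
  have hQA : ∀ q ∈ Q, Complex.exp q ∉ A := by
    intro q hq
    obtain ⟨v, hv, hqv⟩ := mem_thickening_iff.1 hq
    obtain ⟨t, ht, rfl⟩ := hVmem v hv
    exact hav t ht q hqv
  have hVQ : ∀ q ∈ V, ball q ρ ⊆ Q := fun q hq => ball_subset_thickening hq ρ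
  have hVQ' : ∀ q ∈ V, ball q (ρ / 2) ⊆ Q' := fun q hq => ball_subset_thickening hq _
  have hVsub : V ⊆ Q' := self_subset_thickening (by positivity) V
  have hQ'Q : ∀ q ∈ Q', ball q (ρ / 2) ⊆ Q := by
    intro q hq
    obtain ⟨v, hv, hqv⟩ := mem_thickening_iff.1 hq
    exact (ball_subset_ball' (by linarith)).trans (hVQ v hv)
  have hQ'sub : Q' ⊆ Q := thickening_mono (by linarith) V
  obtain ⟨χ, hχd, hχ0, hχ, hχA⟩ := exists_iterate_lift (B := A) (e := Complex.exp) hf hcov hSA hfA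
    hQo hQc n Complex.differentiable_exp.differentiableOn hQA (hQ'sub (hVsub huV)) hnu
  have hχat : ∀ q ∈ Q, DifferentiableAt ℂ χ q := fun q hq =>
    hχd.differentiableAt (hQo.mem_nhds hq)
  have hχA0 : ∀ q ∈ Q, χ q ∉ A := fun q hq => hχA q hq 0 (Nat.zero_le n)
  have hχY : ∀ q ∈ Q', ‖χ q - a₀‖ ≤ Y := by
    intro q hq
    have h1 : ‖q - u‖ ≤ 8 := by
      obtain ⟨v, hv, hqv⟩ := mem_thickening_iff.1 hq
      have h2 := hVdiam u huV v hv
      rw [← dist_eq_norm] at h2 ⊢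
      linarith [dist_triangle q v u, hθ.2]
    have := norm_sub_le_mul_exp_of_omits hQo hQc hχd ha₀ hA hχA0 hQ'c (by positivity) hQ'Q
      (hVsub huV) hq h1
    rwa [hχ0] at this
  have hχB : ∀ q ∈ Q', ‖deriv χ q‖ ≤ B := by
    intro q hq
    have := norm_deriv_le_of_omits (x := q) (ρ := ρ / 2) (by positivity)
      (hχd.mono (hQ'Q q hq)) ha₀ hA (fun z hz => hχA0 z (hQ'Q q hq hz))
    calc ‖deriv χ q‖ ≤ 512 / (ρ / 2) * ‖χ q - a₀‖ := this
      _ ≤ 512 / (ρ / 2) * Y := by gcongr; exact hχY q hq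
      _ ≤ B := by linarith
  have hχne : ∀ q ∈ Q, deriv χ q ≠ 0 := by
    intro q hq h0
    have hd : HasDerivAt (f^[n] ∘ χ) (deriv f^[n] (χ q) * deriv χ q) q :=
      ((hf.iterate n) (χ q)).hasDerivAt.comp q (hχat q hq).hasDerivAt
    have hd' : HasDerivAt (f^[n] ∘ χ) (Complex.exp q) q :=
      (Complex.hasDerivAt_exp q).congr_of_eventuallyEq
        (by filter_upwards [hQo.mem_nhds hq] with v hv using hχ v hv)
    have := hd.unique hd'
    rw [h0, mul_zero] at this
    exact Complex.exp_ne_zero q this.symm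
  have hχ'd : DifferentiableOn ℂ (deriv χ) Q' := (hχd.deriv hQo).mono hQ'sub
  have hθV := hmemV θ ⟨hθ.1, le_rfl⟩
  set x : ℕ → ℂ := fun j => χ (u + (θ * (j / (N₀ + 1 : ℕ)) : ℝ) * Complex.I) with hx
  have hxN : x (N₀ + 1) = χ (u + θ * Complex.I) := by
    simp only [hx]
    rw [div_self (by positivity), mul_one]
  refine ⟨x, by rw [hxN]; exact hχ _ (hQ'sub (hVsub hθV)), ?_⟩
  by_cases hsmall : ∀ q ∈ V, ‖deriv χ q‖ ≤ δ / 8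
  · left
    have h1 := hVc.norm_image_sub_le_of_norm_deriv_le (𝕜 := ℂ)
      (fun q hq => hχat q (hQ'sub (hVsub hq))) hsmall huV hθV
    rw [hxN, mem_ball, dist_eq_norm, ← hχ0]
    have h2 := hVdiam u huV _ hθV
    have := hθ.2
    nlinarith
  · right
    push Not at hsmall
    obtain ⟨v, hv, hvδ⟩ := hsmall
    have hlow : ∀ q ∈ V, τ' ≤ ‖deriv χ q‖ := fun q hq =>
      hHar Q' V (deriv χ) isOpen_thickening hQ'c hχ'd (fun z hz => hχne z (hQ'sub hz)) hχB hVc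
        hVQ' v hv q hq ((hVdiam v hv q hq).trans hθ.2) hvδ.le
    have hcover : ∀ q ∈ V, ∀ p ∈ ball (χ q) (τ' * ρ / 512), ∀ i ≤ n, f^[i] p ∉ A := by
      intro q hq p hp i hi
      obtain ⟨y, hy, rfl⟩ : ∃ y ∈ ball q ρ, χ y = p := by
        by_contra! hno
        have hinj : InjOn χ (ball q ρ) := fun y hy y' hy' h =>
          injOn_exp_ball hρ1 hy hy' (by rw [← hχ y (hVQ q hq hy), ← hχ y' (hVQ q hq hy'), h])
        have h1 := norm_deriv_le_of_injOn hρ (hχd.mono (hVQ q hq)) hinj hno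
        have h2 := (hlow q hq).trans h1
        rw [mem_ball, dist_comm, dist_eq_norm, lt_div_iff₀ (by norm_num)] at hp
        rw [div_mul_eq_mul_div, le_div_iff₀ hρ] at h2
        linarith
      exact hχA y (hVQ q hq hy) i hi
    have hjV : ∀ j ≤ N₀ + 1, u + (θ * (j / (N₀ + 1 : ℕ)) : ℝ) * Complex.I ∈ V := by
      intro j hj
      have h1 : (j : ℝ) / (N₀ + 1 : ℕ) ≤ 1 := by
        rw [div_le_one (by positivity)]
        exact_mod_cast hj
      refine hmemV _ ⟨mul_nonneg hθ.1 (by positivity), ?_⟩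
      nlinarith [hθ.1]
    refine ⟨by simp [hx, hχ0], fun j hj => ⟨hχY _ (hVsub (hjV j hj)), hcover _ (hjV j hj)⟩,
      fun j hj => ?_⟩
    have h1 := hVc.norm_image_sub_le_of_norm_deriv_le (𝕜 := ℂ)
      (fun q hq => hχat q (hQ'sub (hVsub hq))) (fun q hq => hχB q (hVsub hq))
      (hjV j (by omega)) (hjV (j + 1) (by omega))
    rw [dist_eq_norm]
    refine h1.trans ?_
    have h2 : (u + (θ * ((j + 1 : ℕ) / (N₀ + 1 : ℕ)) : ℝ) * Complex.I) -
        (u + (θ * (j / (N₀ + 1 : ℕ)) : ℝ) * Complex.I) =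
        (θ / (N₀ + 1 : ℕ) : ℝ) * Complex.I := by
      push_cast
      ring
    rw [h2, norm_mul, Complex.norm_I, mul_one, Complex.norm_real, Real.norm_eq_abs,
      abs_of_nonneg (div_nonneg hθ.1 (by positivity)), mul_div_assoc', div_le_iff₀ (by positivity)]
    rw [div_le_iff₀ (by positivity)] at hN₀
    have h3 : B * θ ≤ B * 7 := by gcongr; exact hθ.2
    have h4 : 0 < τ' * ρ / 512 := by positivity
    push_cast
    nlinarith

end Chain

section Main

variable {f : ℂ → ℂ} {S W A : Set ℂ}

/-- A limit of chains joining points of the Fatou component `W` to balls whose orbits avoid `A`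
stays in `W`. -/
theorem chain_limit_mem (hf : Differentiable ℂ f)
    (hWmax : ∀ y ρ, ball y ρ ⊆ FatouSet f → (ball y ρ ∩ W).Nonempty → ball y ρ ⊆ W)
    {a₀ : ℂ} (ha₀ : a₀ ∈ A) (hA : ∀ t > 0, ∃ z ∈ A, ‖z - a₀‖ = t) {z₀ : ℂ} (hz₀ : z₀ ∈ W)
    {ρ : ℝ} (hρ : 0 < ρ) {N : ℕ} {x : ℕ → ℕ → ℂ} {y : ℕ → ℂ} {φ : ℕ → ℕ}
    (hφ : Tendsto φ atTop atTop)
    (hlim : ∀ j ≤ N, Tendsto (fun k => x k j) atTop (𝓝 (y j))) (hx0 : ∀ k, x k 0 = z₀)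
    (hxA : ∀ k, ∀ j ≤ N, ∀ p ∈ ball (x k j) ρ, ∀ i ≤ φ k, f^[i] p ∉ A)
    (hxd : ∀ k, ∀ j < N, dist (x k (j + 1)) (x k j) ≤ ρ / 8) :
    y N ∈ W := by
  have hFatou : ∀ j ≤ N, ball (y j) (ρ / 2 / 2) ⊆ FatouSet f := by
    intro j hj
    refine ball_subset_fatouSet hf ha₀ hA fun i p hp => ?_
    obtain ⟨k, hk1, hk2⟩ := (((Metric.tendsto_nhds.1 (hlim j hj)) (ρ / 2) (by positivity)).and
      (hφ.eventually_ge_atTop i)).exists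
    refine hxA k j hj p ?_ i hk2
    rw [mem_ball] at hp ⊢
    linarith [dist_triangle_right p (x k j) (y j)]
  have hmem : ∀ j ≤ N, y j ∈ W := by
    intro j
    induction j with
    | zero =>
      intro _
      have h1 := hlim 0 (Nat.zero_le _)
      simp only [hx0] at h1
      rwa [tendsto_nhds_unique h1 tendsto_const_nhds]
    | succ j ih =>
      intro hj
      have h1 : dist (y (j + 1)) (y j) ≤ ρ / 8 :=
        le_of_tendsto ((hlim (j + 1) hj).dist (hlim j (by omega)))
          (Eventually.of_forall fun k => hxd k j (by omega))
      refine hWmax (y j) (ρ / 2 / 2) (hFatou j (by omega))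
        ⟨y j, mem_ball_self (by positivity), ih (by omega)⟩ ?_
      rw [mem_ball]
      linarith
  exact hmem N le_rfl

end Main

/-- **Theorem (Statement 0).** Let `f ∈ B` with `fⁿ|_{S(f)} → ∞` uniformly, and let `A` be a
closed set containing `S(f) ∪ f(A)` all of whose connected components are unbounded. If there
are `ε > 0`, `c ∈ (0,1)` and `R > 0` such that `dist(f(w), S(f)) > ε` whenever `z ∈ A` with
`|z| ≥ R` and `|w - z| < c|z|`, then `f` has no wandering domains. -/
theorem no_wandering_domains_escaping
    (f : ℂ → ℂ) (S : Set ℂ)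
    (hf : TranscendentalEntire f)
    (hS : IsSingularValueSet f S)
    (hSbdd : Bornology.IsBounded S)
    (hesc : ∀ M : ℝ, ∃ N : ℕ, ∀ n ≥ N, ∀ s ∈ S, M ≤ ‖f^[n] s‖)
    (A : Set ℂ) (hAclosed : IsClosed A)
    (hSA : S ⊆ A) (hfA : f '' A ⊆ A)
    (hAunb : ∀ z ∈ A, ¬Bornology.IsBounded (connectedComponentIn A z))
    (ε c R : ℝ) (hε : 0 < ε) (hc : c ∈ Set.Ioo (0 : ℝ) 1) (hR : 0 < R)
    (hsector : ∀ z ∈ A, R ≤ ‖z‖ → ∀ w : ℂ, ‖w - z‖ < c * ‖z‖ →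
      ε < Metric.infDist (f w) S) :
    ¬∃ W : Set ℂ, IsWanderingDomain f W := by
  rintro ⟨W, ⟨z₀, hz₀F, hW⟩, hdisj⟩
  have hcov := hS.2.1
  have hz₀ : z₀ ∈ W := hW ▸ mem_connectedComponentIn hz₀F
  have hWF : W ⊆ FatouSet f := hW ▸ connectedComponentIn_subset _ _
  have hWo : IsOpen W := hW ▸ (isOpen_fatouSet f).connectedComponentIn
  have hWc : IsPreconnected W := hW ▸ isPreconnected_connectedComponentIn
  have hWmax : ∀ y ρ, ball y ρ ⊆ FatouSet f → (ball y ρ ∩ W).Nonempty → ball y ρ ⊆ W := by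
    rintro y ρ hsub ⟨v, hv, hvW⟩
    rw [hW] at hvW ⊢
    rw [connectedComponentIn_eq hvW]
    exact (convex_ball y ρ).isPreconnected.subset_connectedComponentIn hv hsub
  obtain ⟨a₀, ha₀S⟩ := hf.singularSet_nonempty hcov
  have ha₀ := hSA ha₀S
  have hAcirc : ∀ t > 0, ∃ z ∈ A, ‖z - a₀‖ = t := fun t ht =>
    exists_mem_norm_sub_eq hAunb ha₀ (by simpa using ht.le)
  obtain ⟨M, hM⟩ := exists_return_from_infinity hf hcov hSbdd hesc hWo hWF hdisj hz₀
  obtain ⟨T, N₁, hT⟩ := infDist_lt_of_return hf hcov hSbdd hesc hSA hfA (half_pos hε) hc hR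
    (fun z hz hzR w hw => (half_lt_self hε).trans (hsector z hz hzR w hw)) hWo hWF hdisj hz₀ M
  obtain ⟨δ, hδ, -, hδs⟩ := exists_ball_norm_deriv_iterate_le hf.1 hWo hWF hdisj hz₀ M
  obtain ⟨N₂, hN₂⟩ := hδs (ε / (4 * δ)) (by positivity)
  obtain ⟨Y, ρ, N, hρ, hchain⟩ := exists_chain hf.1 hcov hSA (mapsTo_iff_image_subset.2 hfA) ha₀
    hAcirc (ρ := c / 8) (by linarith [hc.1]) (by linarith [hc.2]) hδ z₀
  have hfreq : ∃ᶠ m in atTop, ‖f^[m + 1] z₀‖ ≤ M ∧ infDist (f^[m + 1] z₀) S < ε / 2 ∧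
      ∃ x : ℕ → ℂ, ε < infDist (f^[m + 1] (x N)) S ∧ x 0 = z₀ ∧
        (∀ j ≤ N, ‖x j - a₀‖ ≤ Y ∧ ∀ p ∈ ball (x j) ρ, ∀ i ≤ m, f^[i] p ∉ A) ∧
        ∀ j < N, dist (x (j + 1)) (x j) ≤ ρ / 8 := by
    rw [frequently_atTop]
    intro k
    obtain ⟨m, hm, hmM, hmT⟩ := hM (max T (max (2 * R) ‖a₀‖)) (max k (max N₁ N₂))
    simp only [max_le_iff, ge_iff_le] at hm hmT
    obtain ⟨hm1, hm2, hm3⟩ := hm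
    obtain ⟨hT1, hT2, hT3⟩ := hmT
    refine ⟨m, hm1, hmM, ?_⟩
    have hclose := hT m hm2 hT1 hmM
    refine ⟨hclose, ?_⟩
    set w := f^[m] z₀ with hw
    have hw0 : w ≠ 0 := norm_pos_iff.1 (by linarith)
    set u := Complex.log w with hu
    have hexp : Complex.exp u = w := Complex.exp_log hw0
    obtain ⟨θ, hθ, hfar, hav⟩ := exists_arc_avoiding (f := f) (u := u) hAclosed hc hR hsector
      (by rw [hexp]; exact hT2)
      (by
        rw [Function.iterate_succ_apply', ← hw] at hclose
        rw [hexp]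
        linarith)
      (by
        obtain ⟨a, ha, hna⟩ := exists_mem_norm_sub_eq (b := 0) (t := ‖w‖) hAunb ha₀
          (by simpa using hT3)
        exact ⟨a, ha, by rw [hexp, ← hna, sub_zero]⟩)
    obtain ⟨x, hxN, hx⟩ := hchain m u θ hθ hexp.symm hav
    have hxf : ε < infDist (f^[m + 1] (x N)) S := by
      rw [Function.iterate_succ_apply', hxN]
      exact hfar
    refine ⟨x, hxf, hx.resolve_left fun hball => ?_⟩
    have h1 := (convex_ball z₀ δ).norm_image_sub_le_of_norm_deriv_le (𝕜 := ℂ) (f := f^[m + 1])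
      (fun v _ => (hf.1.iterate _) v)
      (fun v hv => (hN₂ (m + 1) (by omega) z₀ (mem_ball_self hδ) hmM v hv).2)
      (mem_ball_self hδ) hball
    rw [mem_ball, dist_eq_norm] at hball
    have h2 : ε / (4 * δ) * ‖x N - z₀‖ ≤ ε / (4 * δ) * δ := by gcongr
    have h3 : ε / (4 * δ) * δ = ε / 4 := by field_simp
    have h4 := infDist_le_infDist_add_dist (s := S) (x := f^[m + 1] (x N)) (y := f^[m + 1] z₀)
    rw [dist_eq_norm] at h4
    linarith
  obtain ⟨φ, hφ, hφp⟩ := Filter.extraction_of_frequently_atTop hfreq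
  choose hφM hφS x hxN hx0 hxY hxd using hφp
  obtain ⟨y, -, ψ, hψ, hlim⟩ := (isCompact_univ_pi (X := fun _ : ℕ => ℂ)
    (s := fun _ => closedBall a₀ Y) fun _ => isCompact_closedBall a₀ Y).tendsto_subseq
    (x := fun k j => x k (min j N)) (fun k j _ => by
      rw [mem_closedBall, dist_eq_norm]
      exact (hxY k _ (min_le_right _ _)).1)
  have hlim' : ∀ j ≤ N, Tendsto (fun k => x (ψ k) j) atTop (𝓝 (y j)) := by
    intro j hj
    have := tendsto_pi_nhds.1 hlim j
    simpa only [Function.comp_apply, min_eq_left hj] using this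
  have hφψ : Tendsto (fun k => φ (ψ k)) atTop atTop := (hφ.comp hψ).tendsto_atTop
  have hyW : y N ∈ W := chain_limit_mem hf.1 hWmax ha₀ hAcirc hz₀ hρ hφψ hlim'
    (fun k => hx0 _) (fun k j hj => (hxY _ j hj).2) (fun k => hxd _)
  obtain ⟨δ', hδ', -, hδs'⟩ := exists_ball_norm_deriv_iterate_le hf.1 hWo hWF hdisj hyW (M + 1)
  obtain ⟨N₃, hN₃⟩ := hδs' (ε / (8 * δ')) (by positivity)
  obtain ⟨N₄, hN₄⟩ := dist_iterate_le_of_wandering hf.1 hWo hWF hdisj hWc hz₀ hyW M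
    (β := min 1 (ε / 8)) (by positivity)
  obtain ⟨k, hk1, hk2⟩ := ((Metric.tendsto_nhds.1 (hlim' N le_rfl) δ' hδ').and
    (hφψ.eventually_ge_atTop (max N₃ N₄))).exists
  have hk3 : N₃ ≤ φ (ψ k) + 1 := by have := le_of_max_le_left hk2; omega
  have hk4 : N₄ ≤ φ (ψ k) + 1 := by have := le_of_max_le_right hk2; omega
  have h1 := hN₄ _ hk4 (hφM (ψ k))
  have h2 : ‖f^[φ (ψ k) + 1] (y N)‖ ≤ M + 1 := by
    have := norm_le_norm_add_norm_sub' (f^[φ (ψ k) + 1] (y N)) (f^[φ (ψ k) + 1] z₀)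
    rw [← dist_eq_norm] at this
    linarith [h1.trans (min_le_left _ _), hφM (ψ k)]
  have h3 := (convex_ball (y N) δ').norm_image_sub_le_of_norm_deriv_le (𝕜 := ℂ)
    (f := f^[φ (ψ k) + 1]) (fun v _ => (hf.1.iterate _) v)
    (fun v hv => (hN₃ _ hk3 (y N) (mem_ball_self hδ') h2 v hv).2) (mem_ball_self hδ') hk1
  rw [dist_eq_norm] at hk1
  have h4 : ε / (8 * δ') * ‖x (ψ k) N - y N‖ ≤ ε / (8 * δ') * δ' := by gcongr
  have h5 : ε / (8 * δ') * δ' = ε / 8 := by field_simp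
  have h6 := infDist_le_infDist_add_dist (s := S) (x := f^[φ (ψ k) + 1] (x (ψ k) N))
    (y := f^[φ (ψ k) + 1] z₀)
  have h7 := dist_triangle (f^[φ (ψ k) + 1] (x (ψ k) N)) (f^[φ (ψ k) + 1] (y N))
    (f^[φ (ψ k) + 1] z₀)
  rw [← dist_eq_norm] at h3
  linarith [h1.trans (min_le_right _ _), hxN (ψ k), hφS (ψ k)]
end

section
/- Let V and U be hyperbolic domains in ℂ with V ⊊ U, let z ∈ V, and set R := d_U(z, U∖V) (so 0 < R < ∞). Then 1 < 2e^R/((e^{2R}−1)·log((e^R+1)/(e^R−1))) ≤ ρ_V(z)/ρ_U(z) ≤ 1 + 2/(e^R−1). -/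
open Set Metric Filter Topology

open scoped ENNReal

/-- `π` is a holomorphic covering map from the unit disc onto `C ⊆ ℂ`. -/
def IsDiscCovering (π : ℂ → ℂ) (C : Set ℂ) : Prop :=
  DifferentiableOn ℂ π (ball (0 : ℂ) 1) ∧ π '' ball (0 : ℂ) 1 = C ∧
    ∃ h : MapsTo π (ball (0 : ℂ) 1) C,
      IsCoveringMap (MapsTo.restrict π (ball (0 : ℂ) 1) C h)

/-- `ρ` is the density of the hyperbolic metric of the open set `U ⊆ ℂ`: on each connected
component it is the pushforward of the Poincaré density `2/(1 − |ζ|²)` of the unit disc under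
a holomorphic universal covering map. -/
def IsHypDensity (U : Set ℂ) (ρ : ℂ → ℝ) : Prop :=
  ∀ z ∈ U, ∃ π : ℂ → ℂ, IsDiscCovering π (connectedComponentIn U z) ∧
    ∀ ζ ∈ ball (0 : ℂ) 1, ρ (π ζ) * ‖deriv π ζ‖ = 2 / (1 - ‖ζ‖ ^ 2)

/-- The length of a curve `γ : [0,1] → ℂ` with respect to the conformal density `ρ`. -/
noncomputable def hypLength (ρ : ℂ → ℝ) (γ : ℝ → ℂ) : ℝ :=
  ∫ t in (0 : ℝ)..1, ρ (γ t) * ‖deriv γ t‖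

/-- The hyperbolic distance in `U` with density `ρ`: the infimum of hyperbolic lengths of
(C¹-smooth) curves joining `z` and `w` within `U` (`∞` if there is no such curve). -/
noncomputable def hypDist (U : Set ℂ) (ρ : ℂ → ℝ) (z w : ℂ) : ℝ≥0∞ :=
  ⨅ (γ : ℝ → ℂ) (_ : ContDiffOn ℝ 1 γ (Icc (0 : ℝ) 1) ∧
      (∀ t ∈ Icc (0 : ℝ) 1, γ t ∈ U) ∧ γ 0 = z ∧ γ 1 = w),
    ENNReal.ofReal (hypLength ρ γ)

/-- The hyperbolic distance from a point to a set: `d_U(z, ∅) = ∞`. -/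
noncomputable def hypDistToSet (U : Set ℂ) (ρ : ℂ → ℝ) (z : ℂ) (E : Set ℂ) : ℝ≥0∞ :=
  ⨅ e ∈ E, hypDist U ρ z e

/-- A hyperbolic open subset of `ℂ`: each connected component omits at least two points. -/
def HyperbolicOpen (U : Set ℂ) : Prop :=
  IsOpen U ∧ ∀ z ∈ U, Set.Nontrivial (connectedComponentIn U z)ᶜ

open scoped ComplexConjugate

/-- The automorphism of the unit disc sending `0` to `w`. -/
noncomputable def discShift (w ζ : ℂ) : ℂ := (ζ + w) / (1 + conj w * ζ)

lemma discShift_zero (w : ℂ) : discShift w 0 = w := by simp [discShift]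

lemma one_add_conj_mul_ne_zero {w ζ : ℂ} (hw : ‖w‖ < 1) (hζ : ‖ζ‖ < 1) :
    1 + conj w * ζ ≠ 0 := by
  intro h
  have h1 : ‖conj w * ζ‖ = 1 := by
    rw [eq_neg_of_add_eq_zero_right h]; simp
  rw [norm_mul, Complex.norm_conj] at h1
  nlinarith [norm_nonneg w, norm_nonneg ζ]

lemma one_sub_norm_discShift_sq {w ζ : ℂ} (hw : ‖w‖ < 1) (hζ : ‖ζ‖ < 1) :
    1 - ‖discShift w ζ‖ ^ 2 = (1 - ‖w‖ ^ 2) * (1 - ‖ζ‖ ^ 2) / ‖1 + conj w * ζ‖ ^ 2 := by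
  have h0 : ‖1 + conj w * ζ‖ ^ 2 ≠ 0 :=
    pow_ne_zero _ (norm_ne_zero_iff.2 (one_add_conj_mul_ne_zero hw hζ))
  rw [discShift, norm_div, div_pow, eq_div_iff h0, sub_mul, div_mul_cancel₀ _ h0]
  simp only [← Complex.normSq_eq_norm_sq, Complex.normSq_apply]
  simp
  ring

lemma norm_discShift_lt_one {w ζ : ℂ} (hw : ‖w‖ < 1) (hζ : ‖ζ‖ < 1) : ‖discShift w ζ‖ < 1 := by
  have h0 : 0 < ‖1 + conj w * ζ‖ := norm_pos_iff.2 (one_add_conj_mul_ne_zero hw hζ)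
  have h1 : 0 < 1 - ‖w‖ ^ 2 := by nlinarith [norm_nonneg w]
  have h2 : 0 < 1 - ‖ζ‖ ^ 2 := by nlinarith [norm_nonneg ζ]
  have h3 : 0 < 1 - ‖discShift w ζ‖ ^ 2 := by
    rw [one_sub_norm_discShift_sq hw hζ]; positivity
  nlinarith [norm_nonneg (discShift w ζ)]

lemma hasDerivAt_discShift {w ζ : ℂ} (hw : ‖w‖ < 1) (hζ : ‖ζ‖ < 1) :
    HasDerivAt (discShift w) ((1 - (‖w‖ : ℂ) ^ 2) / (1 + conj w * ζ) ^ 2) ζ := by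
  have h0 := one_add_conj_mul_ne_zero hw hζ
  have h1 : HasDerivAt (fun x : ℂ ↦ x + w) 1 ζ := (hasDerivAt_id ζ).add_const w
  have h2 : HasDerivAt (fun x : ℂ ↦ 1 + conj w * x) (conj w) ζ := by
    simpa using ((hasDerivAt_id ζ).const_mul (conj w)).const_add 1
  have h3 : (1 - (‖w‖ : ℂ) ^ 2) = 1 * (1 + conj w * ζ) - (ζ + w) * conj w := by
    rw [← Complex.conj_mul']
    ring
  exact h3 ▸ h1.div h2 h0

lemma norm_deriv_discShift {w ζ : ℂ} (hw : ‖w‖ < 1) (hζ : ‖ζ‖ < 1) :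
    ‖deriv (discShift w) ζ‖ = (1 - ‖discShift w ζ‖ ^ 2) / (1 - ‖ζ‖ ^ 2) := by
  have h1 : 0 < 1 - ‖w‖ ^ 2 := by nlinarith [norm_nonneg w]
  have h2 : 0 < 1 - ‖ζ‖ ^ 2 := by nlinarith [norm_nonneg ζ]
  rw [(hasDerivAt_discShift hw hζ).deriv, one_sub_norm_discShift_sq hw hζ, norm_div, norm_pow]
  have : ‖(1 - (‖w‖ : ℂ) ^ 2)‖ = 1 - ‖w‖ ^ 2 := by
    rw [← Complex.ofReal_pow, ← Complex.ofReal_one, ← Complex.ofReal_sub, Complex.norm_real,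
      Real.norm_of_nonneg h1.le]
  rw [this]
  field_simp

lemma discShift_neg_discShift {w ζ : ℂ} (hw : ‖w‖ < 1) (hζ : ‖ζ‖ < 1) :
    discShift (-w) (discShift w ζ) = ζ := by
  have h0 := one_add_conj_mul_ne_zero hw hζ
  have h1 := one_add_conj_mul_ne_zero (by simpa using hw : ‖-w‖ < 1) (norm_discShift_lt_one hw hζ)
  have h2 : discShift w ζ * (1 + conj w * ζ) = ζ + w := div_mul_cancel₀ _ h0
  rw [discShift, div_eq_iff h1, map_neg]
  linear_combination h2

lemma discShift_neg_ne_zero {a ζ : ℂ} (ha : ‖a‖ < 1) (hζ : ‖ζ‖ < 1) (h : ζ ≠ a) :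
    discShift (-a) ζ ≠ 0 :=
  div_ne_zero (by simpa [← sub_eq_add_neg, sub_eq_zero] using h)
    (one_add_conj_mul_ne_zero (by simpa using ha) hζ)

/-- `discShift w` as a self-homeomorphism of the unit disc. -/
noncomputable def discShiftHomeomorph (w : ℂ) (hw : ‖w‖ < 1) :
    ball (0 : ℂ) 1 ≃ₜ ball (0 : ℂ) 1 where
  toFun ζ := ⟨discShift w ζ, by
    simpa using norm_discShift_lt_one hw (mem_ball_zero_iff.1 ζ.2)⟩
  invFun ζ := ⟨discShift (-w) ζ, by
    simpa using norm_discShift_lt_one (by simpa using hw) (mem_ball_zero_iff.1 ζ.2)⟩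
  left_inv ζ := Subtype.ext (discShift_neg_discShift hw (mem_ball_zero_iff.1 ζ.2))
  right_inv ζ := Subtype.ext <| by
    simpa using discShift_neg_discShift (w := -w) (by simpa using hw) (mem_ball_zero_iff.1 ζ.2)
  continuous_toFun := by
    refine Continuous.subtype_mk (continuous_iff_continuousAt.2 fun ζ ↦ ?_) _
    exact (hasDerivAt_discShift hw (mem_ball_zero_iff.1 ζ.2)).continuousAt.comp
      continuous_subtype_val.continuousAt
  continuous_invFun := by
    refine Continuous.subtype_mk (continuous_iff_continuousAt.2 fun ζ ↦ ?_) _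
    exact (hasDerivAt_discShift (w := -w) (by simpa using hw)
      (mem_ball_zero_iff.1 ζ.2)).continuousAt.comp continuous_subtype_val.continuousAt

lemma IsHypDensity.exists_covering_map_zero {U : Set ℂ} {ρ : ℂ → ℝ} (hρ : IsHypDensity U ρ)
    (hU : IsConnected U) {z : ℂ} (hz : z ∈ U) :
    ∃ π : ℂ → ℂ, IsDiscCovering π U ∧ π 0 = z ∧
      ∀ ζ ∈ ball (0 : ℂ) 1, ρ (π ζ) * ‖deriv π ζ‖ = 2 / (1 - ‖ζ‖ ^ 2) := by
  obtain ⟨π, hπ, hd⟩ := hρ z hz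
  rw [hU.isPreconnected.connectedComponentIn hz] at hπ
  obtain ⟨hdiff, himg, hmaps, hcov⟩ := hπ
  obtain ⟨w, hwb, hw⟩ : z ∈ π '' ball (0 : ℂ) 1 := himg ▸ hz
  have hw1 : ‖w‖ < 1 := by simpa using hwb
  have hmapsS : MapsTo (discShift w) (ball 0 1) (ball 0 1) := fun ζ hζ ↦ by
    simpa using norm_discShift_lt_one hw1 (by simpa using hζ)
  refine ⟨π ∘ discShift w, ⟨?_, ?_, hmaps.comp hmapsS, ?_⟩, ?_, fun ζ hζ ↦ ?_⟩
  · exact hdiff.comp (fun ζ hζ ↦ (hasDerivAt_discShift hw1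
      (by simpa using hζ)).differentiableAt.differentiableWithinAt) hmapsS
  · rw [image_comp, ← himg]
    congr 1
    refine hmapsS.image_subset.antisymm fun ζ hζ ↦ ?_
    have hζ1 : ‖ζ‖ < 1 := by simpa using hζ
    refine ⟨discShift (-w) ζ, ?_, ?_⟩
    · simpa using norm_discShift_lt_one (by simpa using hw1) hζ1
    · simpa using discShift_neg_discShift (w := -w) (by simpa using hw1) hζ1
  · exact hcov.comp_homeomorph (discShiftHomeomorph w hw1)
  · simp [discShift_zero, hw]
  · have hζ1 : ‖ζ‖ < 1 := by simpa using hζ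
    have hm := hmapsS hζ
    have hpos : 0 < 1 - ‖discShift w ζ‖ ^ 2 := by
      nlinarith [norm_nonneg (discShift w ζ), norm_discShift_lt_one hw1 hζ1]
    rw [deriv_comp _ (hdiff.differentiableAt (isOpen_ball.mem_nhds hm))
      (hasDerivAt_discShift hw1 hζ1).differentiableAt, norm_mul, ← mul_assoc,
      Function.comp_apply, hd _ hm, norm_deriv_discShift hw1 hζ1]
    field_simp

lemma HasStrictDerivAt.exists_local_left_inverse {π : ℂ → ℂ} {d w : ℂ}
    (hπ : HasStrictDerivAt π d w) (hd : d ≠ 0) :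
    ∃ ψ : ℂ → ℂ, HasStrictDerivAt ψ d⁻¹ (π w) ∧ ∀ᶠ y in 𝓝 w, ψ (π y) = y :=
  ⟨_, hπ.to_localInverse hd, (hπ.hasStrictFDerivAt_equiv hd).eventually_left_inverse⟩

lemma HasStrictDerivAt.hasDerivAt_lift {𝕜 : Type*} [NontriviallyNormedField 𝕜]
    [NormedAlgebra 𝕜 ℂ] {π : ℂ → ℂ} {f g : 𝕜 → ℂ} {d g' : ℂ} {x : 𝕜}
    (hπ : HasStrictDerivAt π d (f x)) (hd : d ≠ 0) (hf : ContinuousAt f x)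
    (hg : HasDerivAt g g' x) (hfg : ∀ᶠ y in 𝓝 x, π (f y) = g y) :
    HasDerivAt f (d⁻¹ * g') x := by
  obtain ⟨ψ, hψ, hinv⟩ := hπ.exists_local_left_inverse hd
  rw [hfg.self_of_nhds] at hψ
  refine (hψ.hasDerivAt.comp x hg).congr_of_eventuallyEq ?_
  filter_upwards [hf.eventually hinv, hfg] with y h1 h2
  rw [Function.comp_apply, ← h2, h1]

lemma differentiableOn_of_comp_eqOn {π f g : ℂ → ℂ} {s : Set ℂ} (hs : IsOpen s)
    (hf : ContinuousOn f s) (hg : DifferentiableOn ℂ g s)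
    (hπ : ∀ x ∈ s, ∃ d ≠ 0, HasStrictDerivAt π d (f x)) (hfg : EqOn (π ∘ f) g s) :
    DifferentiableOn ℂ f s := fun x hx ↦ by
  obtain ⟨d, hd, hπd⟩ := hπ x hx
  have hx' := hs.mem_nhds hx
  exact (hπd.hasDerivAt_lift hd (hf.continuousAt hx') (hg.differentiableAt hx').hasDerivAt
    (Filter.eventually_of_mem hx' hfg)).differentiableAt.differentiableWithinAt

lemma IsDiscCovering.exists_continuousOn_lift {E : Type*} [NormedAddCommGroup E]
    [NormedSpace ℝ E] {π : ℂ → ℂ} {C : Set ℂ} (hπ : IsDiscCovering π C) {s : Set E}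
    (hs : Convex ℝ s) {g : E → ℂ} (hg : ContinuousOn g s) (hmaps : MapsTo g s C) {x₀ : E}
    (hx₀ : x₀ ∈ s) (h0 : π 0 = g x₀) :
    ∃ f : E → ℂ, ContinuousOn f s ∧ MapsTo f s (ball 0 1) ∧ f x₀ = 0 ∧ EqOn (π ∘ f) g s := by
  classical
  obtain ⟨-, -, hm, hcov⟩ := hπ
  have := hs.contractibleSpace ⟨x₀, hx₀⟩
  have := hs.locallyPathConnectedSpace
  obtain ⟨F, ⟨hF0, hF⟩, -⟩ := hcov.existsUnique_continuousMap_lifts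
    ⟨hmaps.restrict, hg.mapsToRestrict hmaps⟩ ⟨x₀, hx₀⟩ ⟨0, by simp⟩ (Subtype.ext h0)
  have hext : ∀ x : s, (fun x ↦ if hx : x ∈ s then (F ⟨x, hx⟩ : ℂ) else 0) (x : E) = F x :=
    fun x ↦ by simp
  refine ⟨fun x ↦ if hx : x ∈ s then F ⟨x, hx⟩ else 0, ?_, fun x hx ↦ ?_, ?_, fun x hx ↦ ?_⟩
  · rw [continuousOn_iff_continuous_domRestrict]
    exact (continuous_subtype_val.comp F.continuous).congr fun x ↦ (hext x).symm
  · exact hext ⟨x, hx⟩ ▸ (F ⟨x, hx⟩).2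
  · exact (hext ⟨x₀, hx₀⟩).trans (by rw [hF0])
  · have := congrArg Subtype.val (congrFun hF ⟨x, hx⟩)
    exact (congrArg π (hext ⟨x, hx⟩)).trans this

lemma IsDiscCovering.hasStrictDerivAt {π : ℂ → ℂ} {C : Set ℂ} (hπ : IsDiscCovering π C) {ζ : ℂ}
    (hζ : ζ ∈ ball (0 : ℂ) 1) : HasStrictDerivAt π (deriv π ζ) ζ :=
  (hπ.1.analyticAt (isOpen_ball.mem_nhds hζ)).hasStrictDerivAt

lemma IsDiscCovering.exists_differentiableOn_lift {π : ℂ → ℂ} {C : Set ℂ}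
    (hπ : IsDiscCovering π C) (hne : ∀ ζ ∈ ball (0 : ℂ) 1, deriv π ζ ≠ 0) {r : ℝ} (hr : 0 < r)
    {g : ℂ → ℂ} (hg : DifferentiableOn ℂ g (ball 0 r)) (hmaps : MapsTo g (ball 0 r) C)
    (h0 : π 0 = g 0) :
    ∃ f : ℂ → ℂ, DifferentiableOn ℂ f (ball 0 r) ∧ MapsTo f (ball 0 r) (ball 0 1) ∧ f 0 = 0 ∧
      EqOn (π ∘ f) g (ball 0 r) := by
  obtain ⟨f, hfc, hfm, hf0, hfg⟩ := hπ.exists_continuousOn_lift (convex_ball 0 r) hg.continuousOn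
    hmaps (mem_ball_self hr) h0
  exact ⟨f, differentiableOn_of_comp_eqOn isOpen_ball hfc hg
    (fun x hx ↦ ⟨_, hne _ (hfm hx), hπ.hasStrictDerivAt (hfm hx)⟩) hfg, hfm, hf0, hfg⟩

lemma norm_sub_lt_norm_add_conj {l m : ℂ} (hl : l.re < 0) (hm : m.re < 0) :
    ‖l - m‖ < ‖l + conj m‖ := by
  refine lt_of_pow_lt_pow_left₀ 2 (norm_nonneg _) ?_
  simp only [← Complex.normSq_eq_norm_sq, Complex.normSq_apply]
  simp
  nlinarith [mul_pos_of_neg_of_neg hl hm]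

lemma norm_deriv_zero_le_of_re_neg {l : ℂ → ℂ} (hl : DifferentiableOn ℂ l (ball 0 1))
    (hre : ∀ ζ ∈ ball (0 : ℂ) 1, (l ζ).re < 0) : ‖deriv l 0‖ ≤ -2 * (l 0).re := by
  have h0 : (0 : ℂ) ∈ ball (0 : ℂ) 1 := by simp
  have hne : ∀ ζ ∈ ball (0 : ℂ) 1, l ζ + conj (l 0) ≠ 0 := fun ζ hζ ↦
    norm_pos_iff.1 ((norm_nonneg _).trans_lt (norm_sub_lt_norm_add_conj (hre ζ hζ) (hre 0 h0)))
  have hmaps : MapsTo (fun ζ ↦ (l ζ - l 0) / (l ζ + conj (l 0))) (ball 0 1)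
      (closedBall ((l 0 - l 0) / (l 0 + conj (l 0))) 1) := fun ζ hζ ↦ by
    simp only [sub_self, zero_div, mem_closedBall, dist_zero_right, norm_div]
    exact div_le_one_of_le₀ (norm_sub_lt_norm_add_conj (hre ζ hζ) (hre 0 h0)).le (norm_nonneg _)
  have hS := Complex.norm_deriv_le_div_of_mapsTo_ball
    ((hl.sub_const (l 0)).div (hl.add_const (conj (l 0))) hne) hmaps one_pos
  have hd := (hl.differentiableAt (isOpen_ball.mem_nhds h0)).hasDerivAt
  have hd' := (hd.sub_const (l 0)).div (hd.add_const (conj (l 0))) (hne 0 h0)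
  have hre0 := hre 0 h0
  have hconj : ‖l 0 + conj (l 0)‖ = -2 * (l 0).re := by
    rw [Complex.add_conj, Complex.norm_real, Real.norm_of_nonpos (by linarith)]
    ring
  have hS' : ‖deriv l 0‖ / (-2 * (l 0).re) ≤ 1 := by
    rw [← hconj]
    convert hS using 1
    · rw [← norm_div]
      congr 1
      refine Eq.trans ?_ hd'.deriv.symm
      have := hne 0 h0
      field_simp
      ring
    · simp
  rwa [div_le_one (by linarith)] at hS'

lemma exists_differentiableOn_exp_eq {g : ℂ → ℂ} (hg : DifferentiableOn ℂ g (ball 0 1))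
    (hne : ∀ ζ ∈ ball (0 : ℂ) 1, g ζ ≠ 0) :
    ∃ l : ℂ → ℂ, DifferentiableOn ℂ l (ball 0 1) ∧
      ∀ ζ ∈ ball (0 : ℂ) 1, Complex.exp (l ζ) = g ζ := by
  have := (convex_ball (0 : ℂ) 1).contractibleSpace ⟨0, by simp⟩
  have hsc : IsSimplyConnected (ball (0 : ℂ) 1) :=
    SimplyConnectedSpace.ofContractible (ball (0 : ℂ) 1)
  obtain ⟨l, hlc, hl⟩ := Complex.exists_continuousOn_eqOn_exp_comp hsc isOpen_ball hg.continuousOn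
    (by rintro ⟨ζ, hζ, h⟩; exact hne ζ hζ h)
  exact ⟨l, differentiableOn_of_comp_eqOn isOpen_ball hlc hg
    (fun ζ _ ↦ ⟨_, Complex.exp_ne_zero _, Complex.hasStrictDerivAt_exp _⟩) hl, hl⟩

lemma norm_deriv_zero_le_of_omits {f : ℂ → ℂ} {a : ℂ} (hf : DifferentiableOn ℂ f (ball 0 1))
    (hmaps : MapsTo f (ball 0 1) (ball 0 1)) (hf0 : f 0 = 0) (ha : ‖a‖ < 1)
    (hfa : ∀ ζ ∈ ball (0 : ℂ) 1, f ζ ≠ a) :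
    ‖deriv f 0‖ ≤ 2 * ‖a‖ * Real.log ‖a‖⁻¹ / (1 - ‖a‖ ^ 2) := by
  have h0 : (0 : ℂ) ∈ ball (0 : ℂ) 1 := by simp
  have ha' : ‖-a‖ < 1 := by simpa using ha
  have hfn : ∀ ζ ∈ ball (0 : ℂ) 1, ‖f ζ‖ < 1 := fun ζ hζ ↦ by simpa using hmaps hζ
  have ha0 : 0 < ‖a‖ := norm_pos_iff.2 fun h ↦ hfa 0 h0 (hf0.trans h.symm)
  have hg : DifferentiableOn ℂ (discShift (-a) ∘ f) (ball 0 1) := fun ζ hζ ↦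
    (hasDerivAt_discShift ha' (hfn ζ hζ)).differentiableAt.comp_differentiableWithinAt ζ (hf ζ hζ)
  obtain ⟨l, hl, hexp⟩ := exists_differentiableOn_exp_eq hg fun ζ hζ ↦
    discShift_neg_ne_zero ha (hfn ζ hζ) (hfa ζ hζ)
  have hre : ∀ ζ ∈ ball (0 : ℂ) 1, (l ζ).re < 0 := fun ζ hζ ↦ by
    rw [← Real.exp_lt_one_iff, ← Complex.norm_exp, hexp ζ hζ]
    exact norm_discShift_lt_one ha' (hfn ζ hζ)
  have hre0 : (l 0).re = Real.log ‖a‖ := by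
    rw [← Real.log_exp (l 0).re, ← Complex.norm_exp, hexp 0 h0]
    simp [hf0, discShift_zero]
  have hS := norm_deriv_zero_le_of_re_neg hl hre
  have hd1 := (hl.differentiableAt (isOpen_ball.mem_nhds h0)).hasDerivAt.cexp
  have hd2 : deriv (discShift (-a) ∘ f) 0 = deriv (discShift (-a)) (f 0) * deriv f 0 :=
    deriv_comp _ (hasDerivAt_discShift ha' (hfn 0 h0)).differentiableAt
      (hf.differentiableAt (isOpen_ball.mem_nhds h0))
  have heq : (fun ζ ↦ Complex.exp (l ζ)) =ᶠ[𝓝 0] discShift (-a) ∘ f :=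
    Filter.eventually_of_mem (isOpen_ball.mem_nhds h0) hexp
  have hd3 := congrArg norm (heq.deriv_eq ▸ hd2)
  rw [hd1.deriv, norm_mul, norm_mul, norm_deriv_discShift ha' (hfn 0 h0), hexp 0 h0] at hd3
  simp only [Function.comp_apply, hf0, discShift_zero, norm_neg, norm_zero] at hd3
  have hpos : 0 < 1 - ‖a‖ ^ 2 := by nlinarith
  rw [le_div_iff₀ hpos, Real.log_inv]
  rw [hre0] at hS
  norm_num at hd3
  nlinarith

lemma one_sub_norm_sq_pos {ζ : ℂ} (hζ : ζ ∈ ball (0 : ℂ) 1) : 0 < 1 - ‖ζ‖ ^ 2 := by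
  have := mem_ball_zero_iff.1 hζ
  nlinarith [norm_nonneg ζ]

lemma deriv_ne_zero_of_density_eq {π : ℂ → ℂ} {ρ : ℂ → ℝ}
    (hd : ∀ ζ ∈ ball (0 : ℂ) 1, ρ (π ζ) * ‖deriv π ζ‖ = 2 / (1 - ‖ζ‖ ^ 2)) {ζ : ℂ}
    (hζ : ζ ∈ ball (0 : ℂ) 1) : deriv π ζ ≠ 0 := fun h ↦ by
  have h1 := hd ζ hζ
  have h2 : 0 < 2 / (1 - ‖ζ‖ ^ 2) := div_pos two_pos (one_sub_norm_sq_pos hζ)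
  rw [← h1, h] at h2
  simp at h2

lemma hasDerivAt_log_one_add_sub_log_one_sub {x : ℝ} (h1 : -1 < x) (h2 : x < 1) :
    HasDerivAt (fun x ↦ Real.log (1 + x) - Real.log (1 - x)) (2 / (1 - x ^ 2)) x := by
  have ha : 1 + x ≠ 0 := by linarith
  have hb : 1 - x ≠ 0 := by linarith
  have hc : 1 - x ^ 2 ≠ 0 := by nlinarith
  convert! (((hasDerivAt_id x).const_add 1).log ha).sub (((hasDerivAt_id x).const_sub 1).log hb)
    using 1
  simp only [id]
  field_simp
  ring

lemma hypDist_le_of_covering {U : Set ℂ} {ρ : ℂ → ℝ} {π : ℂ → ℂ} (hπ : IsDiscCovering π U)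
    (hd : ∀ ζ ∈ ball (0 : ℂ) 1, ρ (π ζ) * ‖deriv π ζ‖ = 2 / (1 - ‖ζ‖ ^ 2)) {ζ : ℂ}
    (hζ : ζ ∈ ball (0 : ℂ) 1) :
    hypDist U ρ (π 0) (π ζ) ≤ ENNReal.ofReal (Real.log (1 + ‖ζ‖) - Real.log (1 - ‖ζ‖)) := by
  have hζ1 := mem_ball_zero_iff.1 hζ
  have hnorm : ∀ t ∈ Icc (0 : ℝ) 1, ‖(t : ℂ) * ζ‖ = t * ‖ζ‖ := fun t ht ↦ by
    rw [norm_mul, Complex.norm_real, Real.norm_of_nonneg ht.1]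
  have hlt : ∀ t ∈ Icc (0 : ℝ) 1, t * ‖ζ‖ < 1 := fun t ht ↦
    (mul_le_of_le_one_left (norm_nonneg ζ) ht.2).trans_lt hζ1
  have hball : ∀ t ∈ Icc (0 : ℝ) 1, (t : ℂ) * ζ ∈ ball (0 : ℂ) 1 := fun t ht ↦ by
    rw [mem_ball_zero_iff, hnorm t ht]
    exact hlt t ht
  refine iInf₂_le_of_le (fun t : ℝ ↦ π (t * ζ)) ⟨?_, fun t ht ↦ ?_, by simp, by simp⟩ ?_
  · have h1 : ContDiffOn ℂ 1 π (ball 0 1) := hπ.1.contDiffOn isOpen_ball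
    have h2 : ContDiff ℝ 1 (fun t : ℝ ↦ (t : ℂ) * ζ) :=
      Complex.ofRealCLM.contDiff.mul contDiff_const
    exact (h1.restrict_scalars ℝ).comp h2.contDiffOn hball
  · exact hπ.2.1 ▸ mem_image_of_mem π (hball t ht)
  refine ENNReal.ofReal_le_ofReal (le_of_eq ?_)
  have hcongr : EqOn (fun t : ℝ ↦ ρ (π (t * ζ)) * ‖deriv (fun t : ℝ ↦ π (t * ζ)) t‖)
      (fun t ↦ 2 / (1 - (t * ‖ζ‖) ^ 2) * ‖ζ‖) (uIcc 0 1) := fun t ht ↦ by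
    rw [uIcc_of_le zero_le_one] at ht
    have h1 : HasDerivAt (fun x : ℂ ↦ x * ζ) ζ (t : ℂ) := by
      simpa using (hasDerivAt_id (t : ℂ)).mul_const ζ
    have h2 := ((hπ.hasStrictDerivAt (hball t ht)).hasDerivAt.comp (t : ℂ) h1).comp_ofReal
    have h3 : deriv (fun t : ℝ ↦ π (t * ζ)) t = deriv π (t * ζ) * ζ := h2.deriv
    simp only
    rw [h3, norm_mul, ← mul_assoc, hd _ (hball t ht), hnorm t ht]
  rw [hypLength, intervalIntegral.integral_congr hcongr,
    intervalIntegral.integral_eq_sub_of_hasDerivAt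
      (f := fun t ↦ Real.log (1 + t * ‖ζ‖) - Real.log (1 - t * ‖ζ‖))]
  · simp
  · intro t ht
    rw [uIcc_of_le zero_le_one] at ht
    have h1 : HasDerivAt (fun t : ℝ ↦ t * ‖ζ‖) ‖ζ‖ t := by
      simpa using (hasDerivAt_id t).mul_const ‖ζ‖
    exact (hasDerivAt_log_one_add_sub_log_one_sub
      (by linarith [mul_nonneg ht.1 (norm_nonneg ζ)]) (hlt t ht)).comp t h1
  · refine ContinuousOn.intervalIntegrable fun t ht ↦ ContinuousAt.continuousWithinAt ?_
    rw [uIcc_of_le zero_le_one] at ht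
    have : 1 - (t * ‖ζ‖) ^ 2 ≠ 0 := by
      nlinarith [hlt t ht, mul_nonneg ht.1 (norm_nonneg ζ)]
    fun_prop (disch := assumption)

lemma exists_lift_le_hypLength {U : Set ℂ} {ρ : ℂ → ℝ} {π : ℂ → ℂ} (hπ : IsDiscCovering π U)
    (hd : ∀ ζ ∈ ball (0 : ℂ) 1, ρ (π ζ) * ‖deriv π ζ‖ = 2 / (1 - ‖ζ‖ ^ 2)) {γ : ℝ → ℂ}
    (hγ : ContDiffOn ℝ 1 γ (Icc 0 1)) (hγU : MapsTo γ (Icc 0 1) U) (hγ0 : π 0 = γ 0) :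
    ∃ a ∈ ball (0 : ℂ) 1, π a = γ 1 ∧
      Real.log (1 + ‖a‖) - Real.log (1 - ‖a‖) ≤ hypLength ρ γ := by
  have hm0 : (0 : ℝ) ∈ Icc (0 : ℝ) 1 := by simp
  have hm1 : (1 : ℝ) ∈ Icc (0 : ℝ) 1 := by simp
  obtain ⟨L, hLc, hLm, hL0, hLγ⟩ := hπ.exists_continuousOn_lift (convex_Icc 0 1)
    hγ.continuousOn hγU hm0 hγ0
  have hne : ∀ t ∈ Icc (0 : ℝ) 1, deriv π (L t) ≠ 0 := fun t ht ↦
    deriv_ne_zero_of_density_eq hd (hLm ht)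
  refine ⟨L 1, hLm hm1, hLγ hm1, ?_⟩
  have hρ : ∀ t ∈ Icc (0 : ℝ) 1, ρ (γ t) = 2 / (1 - ‖L t‖ ^ 2) / ‖deriv π (L t)‖ := fun t ht ↦ by
    rw [eq_div_iff (norm_ne_zero_iff.2 (hne t ht)), ← hd _ (hLm ht), ← hLγ ht]
    rfl
  have hint : MeasureTheory.IntegrableOn (fun t ↦ ρ (γ t) * ‖deriv γ t‖) (Icc 0 1) := by
    have hcont : ContinuousOn (fun t ↦ 2 / (1 - ‖L t‖ ^ 2) / ‖deriv π (L t)‖ *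
        ‖derivWithin γ (Icc 0 1) t‖) (Icc 0 1) := by
      refine .mul (.div (.div continuousOn_const (continuousOn_const.sub (hLc.norm.pow 2))
        fun t ht ↦ (one_sub_norm_sq_pos (hLm ht)).ne') (ContinuousOn.norm ?_)
        fun t ht ↦ norm_ne_zero_iff.2 (hne t ht)) (ContinuousOn.norm ?_)
      · exact (hπ.1.deriv isOpen_ball).continuousOn.comp hLc hLm
      · exact hγ.continuousOn_derivWithin (uniqueDiffOn_Icc zero_lt_one) le_rfl
    rw [integrableOn_Icc_iff_integrableOn_Ioo]
    refine (hcont.integrableOn_Icc.mono_set Ioo_subset_Icc_self).congr_fun (fun t ht ↦ ?_)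
      measurableSet_Ioo
    simp only
    rw [hρ t (Ioo_subset_Icc_self ht), derivWithin_of_mem_nhds (Icc_mem_nhds ht.1 ht.2)]
  set u : ℂ := L 1 / ‖L 1‖ with hu
  have hu1 : ‖u‖ ≤ 1 := by
    rw [hu, norm_div, Complex.norm_real, norm_norm]
    exact div_self_le_one _
  have hre : ∀ x : ℂ, |(conj u * x).re| ≤ ‖x‖ := fun x ↦ by
    refine (Complex.abs_re_le_norm _).trans ?_
    rw [norm_mul, Complex.norm_conj]
    exact mul_le_of_le_one_left (norm_nonneg x) hu1
  have hu2 : (conj u * L 1).re = ‖L 1‖ := by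
    rcases eq_or_ne (L 1) 0 with h | h
    · simp [h]
    · have h' : (‖L 1‖ : ℂ) ≠ 0 := by simpa using h
      have : conj u * L 1 = (‖L 1‖ : ℂ) := by
        rw [hu, map_div₀, Complex.conj_ofReal, div_mul_eq_mul_div, Complex.conj_mul',
          div_eq_iff h', sq]
      rw [this, Complex.ofReal_re]
  have hlt : ∀ t ∈ Icc (0 : ℝ) 1, |(conj u * L t).re| < 1 := fun t ht ↦
    (hre _).trans_lt (mem_ball_zero_iff.1 (hLm ht))
  have hxc : ContinuousOn (fun t ↦ (conj u * L t).re) (Icc 0 1) :=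
    Complex.continuous_re.comp_continuousOn (continuousOn_const.mul hLc)
  have hLd : ∀ t ∈ Ioo (0 : ℝ) 1, HasDerivAt L ((deriv π (L t))⁻¹ * deriv γ t) t := fun t ht ↦ by
    have ht' := Ioo_subset_Icc_self ht
    have hn : Icc (0 : ℝ) 1 ∈ 𝓝 t := Icc_mem_nhds ht.1 ht.2
    exact (hπ.hasStrictDerivAt (hLm ht')).hasDerivAt_lift (hne t ht') (hLc.continuousAt hn)
      ((hγ.contDiffAt hn).differentiableAt one_ne_zero).hasDerivAt
      (Filter.eventually_of_mem hn hLγ)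
  have key := intervalIntegral.sub_le_integral_of_hasDeriv_right_of_le zero_le_one
    (g := fun t ↦ Real.log (1 + (conj u * L t).re) - Real.log (1 - (conj u * L t).re))
    (g' := fun t ↦ 2 / (1 - (conj u * L t).re ^ 2) *
      (conj u * ((deriv π (L t))⁻¹ * deriv γ t)).re)
    (φ := fun t ↦ ρ (γ t) * ‖deriv γ t‖) ?_ ?_ hint ?_
  · rw [hypLength]
    simpa only [hu2, hL0, mul_zero, Complex.zero_re, add_zero, sub_zero, Real.log_one] using key
  · intro t ht
    have := abs_lt.1 (hlt t ht)
    exact (hasDerivAt_log_one_add_sub_log_one_sub this.1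
      this.2).continuousAt.comp_continuousWithinAt (f := fun t ↦ (conj u * L t).re) (hxc t ht)
  · intro t ht
    have := abs_lt.1 (hlt t (Ioo_subset_Icc_self ht))
    have h1 : HasDerivAt (fun t ↦ (conj u * L t).re)
        (conj u * ((deriv π (L t))⁻¹ * deriv γ t)).re t :=
      Complex.reCLM.hasFDerivAt.comp_hasDerivAt t ((hLd t ht).const_mul (conj u))
    exact ((hasDerivAt_log_one_add_sub_log_one_sub this.1 this.2).comp t h1).hasDerivWithinAt
  · intro t ht
    have ht' := Ioo_subset_Icc_self ht
    have hpos := one_sub_norm_sq_pos (hLm ht')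
    have hsq : (conj u * L t).re ^ 2 ≤ ‖L t‖ ^ 2 := by
      rw [← sq_abs]
      exact pow_le_pow_left₀ (abs_nonneg _) (hre _) 2
    have h1 : (conj u * ((deriv π (L t))⁻¹ * deriv γ t)).re ≤ ‖deriv γ t‖ / ‖deriv π (L t)‖ := by
      refine (le_abs_self _).trans ((hre _).trans_eq ?_)
      rw [norm_mul, norm_inv, inv_mul_eq_div]
    rw [hρ t ht']
    calc _ ≤ 2 / (1 - ‖L t‖ ^ 2) * (‖deriv γ t‖ / ‖deriv π (L t)‖) := by
          refine mul_le_mul_of_nonneg ?_ h1 ?_ ?_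
          · exact div_le_div_of_nonneg_left two_pos.le hpos (by linarith)
          · exact div_nonneg two_pos.le (by linarith)
          · positivity
      _ = _ := by ring

lemma two_mul_mul_log_inv_div_lt_one {r : ℝ} (hr0 : 0 < r) (hr1 : r < 1) :
    2 * r * Real.log r⁻¹ / (1 - r ^ 2) < 1 := by
  have hpos : 0 < 1 - r ^ 2 := by nlinarith
  have hlog : 0 < Real.log r⁻¹ := Real.log_pos (one_lt_inv₀ hr0 |>.2 hr1)
  have h := Real.self_lt_sinh_iff.2 hlog
  rw [Real.sinh_log (inv_pos.2 hr0), inv_inv, lt_div_iff₀ two_pos] at h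
  rw [div_lt_one hpos]
  have h2 := mul_lt_mul_of_pos_right h hr0
  rw [sub_mul, inv_mul_cancel₀ hr0.ne'] at h2
  linarith

lemma log_one_add_sub_log_one_sub_lt_iff {s x : ℝ} (h0 : 0 ≤ s) (h1 : s < 1) :
    Real.log (1 + s) - Real.log (1 - s) < x ↔ s < (Real.exp x - 1) / (Real.exp x + 1) := by
  have hx := Real.exp_pos x
  rw [← Real.log_div (by linarith) (by linarith),
    Real.log_lt_iff_lt_exp (div_pos (by linarith) (by linarith)), div_lt_iff₀ (by linarith),
    lt_div_iff₀ (by linarith)]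
  constructor <;> intro h <;> linarith

/-- **Theorem (Statement 6).** Let `V ⊊ U` be hyperbolic domains in `ℂ`, `z ∈ V`, and
`R = d_U(z, U∖V)` (a finite positive number). Then
`1 < 2e^R/((e^{2R}−1) log((e^R+1)/(e^R−1))) ≤ ρ_V(z)/ρ_U(z) ≤ 1 + 2/(e^R−1)`. -/
theorem density_comparison
    (U V : Set ℂ)
    (hUo : IsOpen U) (hUconn : IsConnected U) (hUhyp : Set.Nontrivial Uᶜ)
    (hVo : IsOpen V) (hVconn : IsConnected V) (hVhyp : Set.Nontrivial Vᶜ)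
    (hVU : V ⊂ U)
    (ρU ρV : ℂ → ℝ) (hρU : IsHypDensity U ρU) (hρV : IsHypDensity V ρV)
    (z : ℂ) (hz : z ∈ V)
    (R : ℝ) (hR : 0 < R)
    (hRdef : hypDistToSet U ρU z (U \ V) = ENNReal.ofReal R) :
    1 < 2 * Real.exp R /
        ((Real.exp (2 * R) - 1) * Real.log ((Real.exp R + 1) / (Real.exp R - 1))) ∧
    2 * Real.exp R /
        ((Real.exp (2 * R) - 1) * Real.log ((Real.exp R + 1) / (Real.exp R - 1))) ≤
      ρV z / ρU z ∧
    ρV z / ρU z ≤ 1 + 2 / (Real.exp R - 1) := by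
  obtain ⟨π, hπ, hπ0, hπd⟩ := hρU.exists_covering_map_zero hUconn (hVU.subset hz)
  obtain ⟨κ, hκ, hκ0, hκd⟩ := hρV.exists_covering_map_zero hVconn hz
  have hπne : ∀ ζ ∈ ball (0 : ℂ) 1, deriv π ζ ≠ 0 := fun ζ ↦ deriv_ne_zero_of_density_eq hπd
  have hκne : ∀ ζ ∈ ball (0 : ℂ) 1, deriv κ ζ ≠ 0 := fun ζ ↦ deriv_ne_zero_of_density_eq hκd
  have h0 : (0 : ℂ) ∈ ball (0 : ℂ) 1 := by simp
  have hE : 1 < Real.exp R := Real.one_lt_exp_iff.2 hR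
  set r := (Real.exp R - 1) / (Real.exp R + 1) with hr
  have hr0 : 0 < r := div_pos (by linarith) (by linarith)
  have hr1 : r < 1 := by rw [hr, div_lt_one (by linarith)]; linarith
  have hrinv : (Real.exp R + 1) / (Real.exp R - 1) = r⁻¹ := by rw [hr, inv_div]
  have hlog : 0 < Real.log r⁻¹ := Real.log_pos (one_lt_inv₀ hr0 |>.2 hr1)
  have hE2 : Real.exp (2 * R) = Real.exp R ^ 2 := by
    rw [← Real.exp_nat_mul]
    norm_num
  have hbound : 2 * Real.exp R /
      ((Real.exp (2 * R) - 1) * Real.log ((Real.exp R + 1) / (Real.exp R - 1))) =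
      (2 * r * Real.log r⁻¹ / (1 - r ^ 2))⁻¹ := by
    have h3 : 2 * r / (1 - r ^ 2) = (Real.exp R ^ 2 - 1) / (2 * Real.exp R) := by
      have h4 : 1 - r ^ 2 ≠ 0 := by nlinarith
      rw [div_eq_div_iff h4 (by positivity), hr]
      field_simp
      ring
    rw [hrinv, hE2, mul_div_right_comm (2 * r), h3, mul_inv,
      inv_div (Real.exp R ^ 2 - 1), div_mul_eq_div_div, div_eq_mul_inv]
  have hfpos : 0 < 2 * r * Real.log r⁻¹ / (1 - r ^ 2) :=
    div_pos (by positivity) (by nlinarith)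
  have hratio : ρV z / ρU z = ‖deriv π 0‖ / ‖deriv κ 0‖ := by
    have h1 := hπd 0 h0
    have h2 := hκd 0 h0
    have h3 := norm_ne_zero_iff.2 (hπne 0 h0)
    have h4 := norm_ne_zero_iff.2 (hκne 0 h0)
    rw [hπ0, ← eq_div_iff h3] at h1
    rw [hκ0, ← eq_div_iff h4] at h2
    rw [h1, h2]
    simp
    field_simp
  rw [hbound, hratio]
  -- hyperbolic balls of radius less than `R` are contained in `V`
  have hball : MapsTo π (ball 0 r) V := fun ζ hζ ↦ by
    have hζ1 := ball_subset_ball hr1.le hζ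
    by_contra hV
    have hle : hypDistToSet U ρU z (U \ V) ≤ hypDist U ρU z (π ζ) :=
      iInf₂_le _ ⟨hπ.2.1 ▸ mem_image_of_mem π hζ1, hV⟩
    have hlt := (log_one_add_sub_log_one_sub_lt_iff (norm_nonneg ζ)
      (mem_ball_zero_iff.1 hζ1)).2 (mem_ball_zero_iff.1 hζ)
    rw [hRdef] at hle
    exact (((ENNReal.ofReal_lt_ofReal_iff hR).2 hlt).trans_le hle).not_ge
      (hπ0 ▸ hypDist_le_of_covering hπ hπd hζ1)
  refine ⟨(one_lt_inv₀ hfpos).2 (two_mul_mul_log_inv_div_lt_one hr0 hr1), ?_, ?_⟩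
  · obtain ⟨f, hf, hfm, hf0, hfκ⟩ := hπ.exists_differentiableOn_lift hπne one_pos hκ.1
      (fun ζ hζ ↦ hVU.subset (hκ.2.1 ▸ mem_image_of_mem κ hζ)) (hπ0.trans hκ0.symm)
    have hchain : deriv κ 0 = deriv π 0 * deriv f 0 := by
      have heq : π ∘ f =ᶠ[𝓝 0] κ := Filter.eventually_of_mem (isOpen_ball.mem_nhds h0) hfκ
      rw [← heq.deriv_eq, deriv_comp _ (hπ.hasStrictDerivAt (hfm h0)).hasDerivAt.differentiableAt
        (hf.differentiableAt (isOpen_ball.mem_nhds h0)), hf0]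
    have hfd : 0 < ‖deriv f 0‖ := norm_pos_iff.2 fun h ↦ hκne 0 h0 (by rw [hchain, h, mul_zero])
    have hπd0 := norm_pos_iff.2 (hπne 0 h0)
    suffices ‖deriv f 0‖ ≤ 2 * r * Real.log r⁻¹ / (1 - r ^ 2) by
      rw [hchain, norm_mul, div_mul_cancel_left₀ hπd0.ne']
      exact inv_anti₀ hfd this
    by_contra! hlt
    have hcont : ContinuousAt (fun s : ℝ ↦ 2 * s * Real.log s⁻¹ / (1 - s ^ 2)) r := by
      have h1 : 1 - r ^ 2 ≠ 0 := by nlinarith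
      have h2 := hr0.ne'
      have h3 := (inv_pos.2 hr0).ne'
      fun_prop (disch := assumption)
    have hcont' : ContinuousAt (fun x : ℝ ↦ (Real.exp x - 1) / (Real.exp x + 1)) R := by
      have h1 : Real.exp R + 1 ≠ 0 := by linarith
      fun_prop (disch := assumption)
    obtain ⟨δ, hδ, hs⟩ := Metric.eventually_nhds_iff.1 (hcont.eventually_lt_const hlt)
    obtain ⟨R', hRR', hR'⟩ := ((hcont'.eventually_lt_const
      (show (Real.exp R - 1) / (Real.exp R + 1) < r + δ by linarith)).filter_mono
      nhdsWithin_le_nhds |>.and (self_mem_nhdsWithin (s := Ioi R))).exists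
    have hR0' : 0 < R' := hR.trans hR'
    have hdist : hypDistToSet U ρU z (U \ V) < ENNReal.ofReal R' := by
      rw [hRdef]
      exact (ENNReal.ofReal_lt_ofReal_iff hR0').2 hR'
    simp only [hypDistToSet, hypDist, iInf_lt_iff] at hdist
    obtain ⟨e, he, γ, ⟨hγ, hγU, hγ0, hγ1⟩, hlen⟩ := hdist
    obtain ⟨a, ha, hae, hal⟩ := exists_lift_le_hypLength hπ hπd hγ hγU (hπ0.trans hγ0.symm)
    have ha1 := mem_ball_zero_iff.1 ha
    have haV : π a ∉ V := hae.trans hγ1 ▸ he.2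
    have har : r ≤ ‖a‖ := not_lt.1 fun h ↦ haV (hball (mem_ball_zero_iff.2 h))
    have har' := (log_one_add_sub_log_one_sub_lt_iff (norm_nonneg a) ha1).1
      (hal.trans_lt ((ENNReal.ofReal_lt_ofReal_iff hR0').1 hlen))
    refine (hs (y := ‖a‖) ?_).not_ge (norm_deriv_zero_le_of_omits hf hfm hf0 ha1 fun ζ hζ h ↦
      haV ?_)
    · rw [Real.dist_eq, abs_of_nonneg (sub_nonneg.2 har)]
      linarith
    · rw [← h]
      exact mem_of_eq_of_mem (hfκ hζ) (hκ.2.1 ▸ mem_image_of_mem κ hζ)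
  · obtain ⟨f, hf, hfm, hf0, hfπ⟩ := hκ.exists_differentiableOn_lift hκne hr0
      (hπ.1.mono (ball_subset_ball hr1.le)) hball (hκ0.trans hπ0.symm)
    have hr0' := mem_ball_self (x := (0 : ℂ)) hr0
    have hchain : deriv π 0 = deriv κ 0 * deriv f 0 := by
      have heq : κ ∘ f =ᶠ[𝓝 0] π := Filter.eventually_of_mem (isOpen_ball.mem_nhds hr0') hfπ
      rw [← heq.deriv_eq, deriv_comp _ (hκ.hasStrictDerivAt (hfm hr0')).hasDerivAt.differentiableAt
        (hf.differentiableAt (isOpen_ball.mem_nhds hr0')), hf0]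
    have hS := Complex.norm_deriv_le_div_of_mapsTo_ball hf
      (by rw [hf0]; exact hfm.mono_right ball_subset_closedBall) hr0
    rw [hchain, norm_mul, mul_div_cancel_left₀ _ (norm_ne_zero_iff.2 (hκne 0 h0))]
    refine hS.trans_eq ?_
    rw [one_div, ← hrinv]
    have : Real.exp R - 1 ≠ 0 := by linarith
    field_simp
    ring
end
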